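/- Let 1 < α ≤ 2 and J(r) = r^{-α}. Let h:ℤ→ℝ_{≥0} be a field for which there exists η ∈ (0,1) such that ∑_{x∈Λ} h_x ≤ η · ∑_{x∈Λ} ∑_{y∈ℤ∖Λ} |x−y|^{−α} for every nonempty finite Λ ⊂ ℤ. Then for every ε ∈ (0,1) there exists β̄ > 0 such that for all β ≥ β̄ and all L ∈ ℕ one has ⟨σ₀⟩⁺_{J,h,β,L} ≥ 1 − ε and ⟨σ₀⟩⁻_{J,h,β,L} ≤ −(1 − ε); that is, such a small decaying field does not destroy the phase transition. -/

import Mathlib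

noncomputable section

/-! Configurations in `Ω_L^+` (equal to `+1` off `[-L,L]`) are encoded by the finite set
`A ⊆ [-L,L]` of their minus sites, and configurations in `Ω_L^-` by the finite set of
their plus sites. -/

/-- The spin configuration with plus boundary condition and minus sites `A`. -/
def spinP (A : Finset ℤ) (x : ℤ) : ℝ := if x ∈ A then -1 else 1

/-- The spin configuration with minus boundary condition and plus sites `A`. -/
def spinM (A : Finset ℤ) (x : ℤ) : ℝ := if x ∈ A then 1 else -1

/-- The Hamiltonian `H_J(σ) = ∑_{x<y} |x−y|^{-α} (1 − σ_x σ_y)`, as a `tsum` over pairs. -/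
def hamJ (α : ℝ) (σ : ℤ → ℝ) : ℝ :=
  ∑' p : ℤ × ℤ, if p.1 < p.2 then |(p.1 : ℝ) - (p.2 : ℝ)| ^ (-α) * (1 - σ p.1 * σ p.2) else 0

/-- The Hamiltonian with field, plus boundary condition:
`H⁺_{J,h}(σ) = H_J(σ) + ∑_x h_x (1 − σ_x)`. -/
def hamP (α : ℝ) (h : ℤ → ℝ) (σ : ℤ → ℝ) : ℝ := hamJ α σ + ∑' x : ℤ, h x * (1 - σ x)

/-- The Hamiltonian with field, minus boundary condition:
`H⁻_{J,h}(σ) = H_J(σ) − ∑_x h_x (1 + σ_x)`. -/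
def hamM (α : ℝ) (h : ℤ → ℝ) (σ : ℤ → ℝ) : ℝ := hamJ α σ - ∑' x : ℤ, h x * (1 + σ x)

/-- Subsets of the box `[-L, L]`. -/
def box (L : ℕ) : Finset (Finset ℤ) := (Finset.Icc (-(L : ℤ)) (L : ℤ)).powerset

/-- The finite-volume Gibbs expectation `⟨σ₀⟩⁺_{J,h,β,L}`. -/
def avgP (α : ℝ) (h : ℤ → ℝ) (β : ℝ) (L : ℕ) : ℝ :=
  (∑ A ∈ box L, spinP A 0 * Real.exp (-β * hamP α h (spinP A))) /
    ∑ A ∈ box L, Real.exp (-β * hamP α h (spinP A))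

/-- The finite-volume Gibbs expectation `⟨σ₀⟩⁻_{J,h,β,L}`. -/
def avgM (α : ℝ) (h : ℤ → ℝ) (β : ℝ) (L : ℕ) : ℝ :=
  (∑ A ∈ box L, spinM A 0 * Real.exp (-β * hamM α h (spinM A))) /
    ∑ A ∈ box L, Real.exp (-β * hamM α h (spinM A))

/-! A multiscale Peierls argument. The spin flips of a configuration split into contours which are
even and far apart relative to their scales. If `0` is a minus site, then some contour `γ` encloses
it, and we flip all spins enclosed by `γ`.

* The cut energy of the enclosed set is at least a multiple of the number of dyadic cells, at all
  scales up to that of `γ`, that are needed to cover `γ`. Indeed, a flip isolated at scale `2 ^ k`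
  separates about `4 ^ k` pairs at distance about `2 ^ k`, of total coupling at least
  `4 ^ k * 2 ^ (-α k) ≥ 1`, and if few flips are isolated, then the cell counts decay geometrically.
* The other contours and the field can compensate only for a fraction of that energy: a contour of
  scale `s` is surrounded by an empty buffer much longer than `2 ^ s`, and the field is smaller than
  the cut energy by the factor `η`.
* Halving positions repeatedly shows that the number of contours enclosing `0` with `n` cells grows
  at most exponentially in `n`, so that the Gibbs weight of the minus sites at `0` is
  exponentially small in `β`. -/

open Finset hiding box
open scoped symmDiff

/-! ### Spin flips and the sites they enclose -/

/-- The sites separated from infinity by an odd number of the spin flips `γ`, where `q ∈ γ` stands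
for a flip between `q - 1` and `q`. The restriction to sites between two flips makes this a finite
set for every `γ`. -/
def enclosed (γ : Finset ℤ) : Finset ℤ :=
  {x ∈ (γ ×ˢ γ).biUnion fun p => Ico p.1 p.2 | Odd #{q ∈ γ | q ≤ x}}

lemma exists_le_lt_of_mem_enclosed {γ : Finset ℤ} {x : ℤ} (hx : x ∈ enclosed γ) :
    ∃ p ∈ γ, ∃ q ∈ γ, p ≤ x ∧ x < q := by
  simp only [enclosed, mem_filter, mem_biUnion, mem_product, mem_Ico] at hx
  obtain ⟨⟨⟨p, q⟩, ⟨hp, hq⟩, hpx, hxq⟩, -⟩ := hx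
  exact ⟨p, hp, q, hq, hpx, hxq⟩

lemma mem_enclosed {γ : Finset ℤ} (hγ : Even #γ) {x : ℤ} :
    x ∈ enclosed γ ↔ Odd #{q ∈ γ | q ≤ x} := by
  refine ⟨fun hx => (mem_filter.1 hx).2, fun hx => mem_filter.2 ⟨?_, hx⟩⟩
  obtain ⟨p, hp⟩ : ({q ∈ γ | q ≤ x} : Finset ℤ).Nonempty := card_pos.1 hx.pos
  obtain ⟨q, hq, hxq⟩ : ∃ q ∈ γ, x < q := by
    by_contra! hle
    rw [filter_true_of_mem hle] at hx
    exact Nat.not_even_iff_odd.2 hx hγ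
  rw [mem_filter] at hp
  simp only [mem_biUnion, mem_product, mem_Ico]
  exact ⟨(p, q), ⟨hp.1, hq⟩, hp.2, hxq⟩

lemma mem_enclosed_iff_mem_enclosed {γ : Finset ℤ} (hγ : Even #γ) {x y : ℤ} (hxy : x ≤ y) :
    (x ∈ enclosed γ ↔ y ∈ enclosed γ) ↔ Even #{q ∈ γ | q ∈ Ioc x y} := by
  have hcard : #{q ∈ γ | q ≤ y} = #{q ∈ γ | q ≤ x} + #{q ∈ γ | q ∈ Ioc x y} := by
    rw [← card_union_of_disjoint]
    · congr 1; ext q; grind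
    · exact disjoint_filter.2 fun q _ hqx hq => by grind
  rw [mem_enclosed hγ, mem_enclosed hγ, hcard, ← Nat.not_even_iff_odd, ← Nat.not_even_iff_odd,
    Nat.even_add]
  tauto

/-- The spin flips of the configuration with minus set `A`: the points `q` such that exactly one of
`q - 1` and `q` lies in `A`. -/
def flips (A : Finset ℤ) : Finset ℤ := A ∆ A.image (· + 1)

lemma mem_flips {A : Finset ℤ} {q : ℤ} : q ∈ flips A ↔ ¬(q ∈ A ↔ q - 1 ∈ A) := by
  have himage : q ∈ A.image (· + 1) ↔ q - 1 ∈ A := by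
    simp [← sub_eq_add_neg]
  rw [flips, mem_symmDiff, himage]
  tauto

lemma even_card_symmDiff {ι : Type*} [DecidableEq ι] {s t : Finset ι} :
    Even #(s ∆ t) ↔ (Even #s ↔ Even #t) := by
  have hs := card_sdiff_add_card_inter s t
  have ht := card_sdiff_add_card_inter t s
  rw [inter_comm] at ht
  rw [symmDiff_def, sup_eq_union, card_union_of_disjoint disjoint_sdiff_sdiff, ← hs, ← ht]
  simp only [Nat.even_add]
  tauto

lemma even_card_flips (A : Finset ℤ) : Even #(flips A) := by
  rw [flips, even_card_symmDiff, card_image_of_injective _ (add_left_injective 1)]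

lemma enclosed_flips (A : Finset ℤ) : enclosed (flips A) = A := by
  ext x
  have hsplit : ({q ∈ flips A | q ≤ x} : Finset ℤ) =
      {q ∈ A | q ≤ x} ∆ ({q ∈ A | q ≤ x - 1} : Finset ℤ).image (· + 1) := by
    ext q
    have himage : q ∈ ({q ∈ A | q ≤ x - 1} : Finset ℤ).image (· + 1) ↔ q - 1 ∈ A ∧ q ≤ x := by
      simp [← sub_eq_add_neg]
    rw [mem_filter, mem_flips, mem_symmDiff, himage, mem_filter]
    tauto
  have hcard : #{q ∈ A | q ≤ x} = #{q ∈ A | q ≤ x - 1} + if x ∈ A then 1 else 0 := by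
    split_ifs with hx
    · rw [← card_insert_of_notMem (a := x) (by simp)]
      congr 1; ext q; grind
    · rw [add_zero]
      congr 1; ext q; grind
  rw [mem_enclosed (even_card_flips A), ← Nat.not_even_iff_odd, hsplit, even_card_symmDiff,
    card_image_of_injective _ (add_left_injective 1), hcard, Nat.even_add]
  by_cases hx : x ∈ A <;> simp only [hx, if_true, if_false, Nat.not_even_one, Even.zero] <;> tauto

section DisjointFamily

variable {𝒞 : Finset (Finset ℤ)} (h𝒞 : (𝒞 : Set (Finset ℤ)).PairwiseDisjoint id)
  (heven : ∀ γ ∈ 𝒞, Even #γ)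
include h𝒞 heven

lemma mem_enclosed_biUnion {x : ℤ} :
    x ∈ enclosed (𝒞.biUnion id) ↔ Odd #{γ ∈ 𝒞 | x ∈ enclosed γ} := by
  have hunion : Even #(𝒞.biUnion id) := by
    rw [card_biUnion h𝒞]
    exact even_sum _ heven
  have hparts : #{q ∈ 𝒞.biUnion id | q ≤ x} = ∑ γ ∈ 𝒞, #{q ∈ γ | q ≤ x} := by
    rw [filter_biUnion]
    exact card_biUnion fun γ hγ δ hδ hne => disjoint_filter_filter (h𝒞 hγ hδ hne)
  rw [mem_enclosed hunion, hparts, odd_sum_iff_odd_card_odd,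
    filter_congr fun γ hγ => (mem_enclosed (heven γ hγ)).symm]

lemma exists_mem_enclosed_of_mem_enclosed_biUnion {x : ℤ} (hx : x ∈ enclosed (𝒞.biUnion id)) :
    ∃ γ ∈ 𝒞, x ∈ enclosed γ :=
  filter_nonempty_iff.1 <| card_pos.1 ((mem_enclosed_biUnion h𝒞 heven).1 hx).pos

lemma exists_ne_not_mem_enclosed_iff {γ : Finset ℤ} (hγ : γ ∈ 𝒞) {x y : ℤ} (hx : x ∈ enclosed γ)
    (hy : y ∉ enclosed γ) (hxy : x ∈ enclosed (𝒞.biUnion id) ↔ y ∈ enclosed (𝒞.biUnion id)) :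
    ∃ δ ∈ 𝒞, δ ≠ γ ∧ ¬(x ∈ enclosed δ ↔ y ∈ enclosed δ) := by
  by_contra! hagree
  have hinsert : ({δ ∈ 𝒞 | x ∈ enclosed δ} : Finset _) = insert γ {δ ∈ 𝒞 | y ∈ enclosed δ} := by
    ext δ; grind
  rw [mem_enclosed_biUnion h𝒞 heven, mem_enclosed_biUnion h𝒞 heven, hinsert,
    card_insert_of_notMem (by simp [hy]), Nat.odd_add_one] at hxy
  tauto

end DisjointFamily

/-! ### Contours -/

/-- The dyadic scale of a finite set of integers: its diameter is less than `2 ^ (scale γ + 1)`, and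
at least `2 ^ scale γ` unless it is `0`. -/
def scale (γ : Finset ℤ) : ℕ := (γ ×ˢ γ).sup fun p => Nat.log 2 (p.1 - p.2).natAbs

lemma scale_mono : Monotone scale := fun _ _ h => sup_mono (product_subset_product h h)

lemma abs_sub_lt_two_pow_scale {γ : Finset ℤ} {p q : ℤ} (hp : p ∈ γ) (hq : q ∈ γ) :
    |p - q| < 2 ^ (scale γ + 1) := by
  have hlog : Nat.log 2 (p - q).natAbs ≤ scale γ :=
    le_sup (f := fun p : ℤ × ℤ => Nat.log 2 (p.1 - p.2).natAbs) (mk_mem_product hp hq)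
  rw [Int.abs_eq_natAbs]
  exact_mod_cast Nat.lt_pow_of_log_lt one_lt_two (Nat.lt_succ_of_le hlog)

lemma scale_le {γ : Finset ℤ} {k : ℕ} (hγ : ∀ p ∈ γ, ∀ q ∈ γ, |p - q| < 2 ^ (k + 1)) :
    scale γ ≤ k := by
  refine Finset.sup_le fun p hp => Nat.le_of_lt_succ (Nat.log_lt_of_lt_pow' k.succ_ne_zero ?_)
  have := hγ p.1 (mem_product.1 hp).1 p.2 (mem_product.1 hp).2
  rw [Int.abs_eq_natAbs] at this
  exact_mod_cast this

/-- Contours of scale `s` keep the distance `2 ^ (reach m s + 1)` from all contours of larger scale.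
The exponent exceeds `s`, by a margin that grows with `s`, so that the total effect of all smaller
contours on a site is summable over the scales; `m` makes this effect as small as desired. -/
def reach (m s : ℕ) : ℕ := m + 1 + s + s / 2

lemma reach_mono (m : ℕ) : Monotone (reach m) := fun s t h => by
  unfold reach; gcongr

/-- Two sets of flips are far apart when their distance is large compared to the smaller of their
scales. -/
def FarApart (m : ℕ) (γ δ : Finset ℤ) : Prop :=
  ∀ p ∈ γ, ∀ q ∈ δ, (2 : ℤ) ^ (reach m (min (scale γ) (scale δ)) + 1) ≤ |p - q|

namespace FarApart

variable {m : ℕ} {γ γ' δ δ' : Finset ℤ}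

lemma symm (h : FarApart m γ δ) : FarApart m δ γ := by
  intro p hp q hq
  rw [min_comm, abs_sub_comm]
  exact h q hq p hp

instance : Std.Symm (FarApart m) := ⟨fun _ _ => symm⟩

lemma mono (h : FarApart m γ δ) (hγ : γ' ⊆ γ) (hδ : δ' ⊆ δ) : FarApart m γ' δ' := by
  intro p hp q hq
  refine le_trans ?_ (h p (hγ hp) q (hδ hq))
  gcongr
  · norm_num
  · exact reach_mono m (min_le_min (scale_mono hγ) (scale_mono hδ))

lemma disjoint (h : FarApart m γ δ) : Disjoint γ δ := by
  refine disjoint_left.2 fun p hpγ hpδ => ?_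
  have hpos : (0 : ℤ) < |p - p| := lt_of_lt_of_le (by positivity) (h p hpγ p hpδ)
  simp at hpos

end FarApart

/-- A contour is a nonempty even set of flips that cannot be split into two even parts far apart
from each other. -/
structure IsContour (m : ℕ) (γ : Finset ℤ) : Prop where
  nonempty : γ.Nonempty
  even_card : Even #γ
  irreducible : ∀ δ ⊆ γ, δ.Nonempty → δ ≠ γ → Even #δ → ¬FarApart m δ (γ \ δ)

/-- A decomposition of the set of flips `γ` into contours that are far apart from each other. -/
structure IsContourDecomposition (m : ℕ) (𝒞 : Finset (Finset ℤ)) (γ : Finset ℤ) : Prop where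
  biUnion_eq : 𝒞.biUnion id = γ
  isContour : ∀ δ ∈ 𝒞, IsContour m δ
  pairwise_farApart : (𝒞 : Set (Finset ℤ)).Pairwise (FarApart m)

namespace IsContourDecomposition

variable {m : ℕ} {𝒞 𝒬 : Finset (Finset ℤ)} {γ δ : Finset ℤ}

lemma subset (h : IsContourDecomposition m 𝒞 γ) (hδ : δ ∈ 𝒞) : δ ⊆ γ :=
  h.biUnion_eq ▸ subset_biUnion_of_mem id hδ

lemma pairwiseDisjoint (h : IsContourDecomposition m 𝒞 γ) :
    (𝒞 : Set (Finset ℤ)).PairwiseDisjoint id :=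
  h.pairwise_farApart.mono' fun _ _ => FarApart.disjoint

lemma union (hγ : IsContourDecomposition m 𝒞 γ) (hδ : IsContourDecomposition m 𝒬 δ)
    (hfar : FarApart m γ δ) : IsContourDecomposition m (𝒞 ∪ 𝒬) (γ ∪ δ) where
  biUnion_eq := by rw [union_biUnion, hγ.biUnion_eq, hδ.biUnion_eq]
  isContour ζ hζ := (mem_union.1 hζ).elim (hγ.isContour ζ) (hδ.isContour ζ)
  pairwise_farApart := by
    rw [coe_union, Set.pairwise_union_of_symm]
    exact ⟨hγ.pairwise_farApart, hδ.pairwise_farApart,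
      fun ζ hζ ξ hξ _ => hfar.mono (hγ.subset hζ) (hδ.subset hξ)⟩

end IsContourDecomposition

lemma exists_isContourDecomposition (m : ℕ) {γ : Finset ℤ} (hγ : Even #γ) :
    ∃ 𝒞, IsContourDecomposition m 𝒞 γ := by
  induction γ using Finset.strongInduction with
  | H γ ih =>
    rcases γ.eq_empty_or_nonempty with rfl | hne
    · exact ⟨∅, by simp, by simp, by simp⟩
    by_cases hsplit : ∃ δ ⊆ γ, δ.Nonempty ∧ δ ≠ γ ∧ Even #δ ∧ FarApart m δ (γ \ δ)
    · obtain ⟨δ, hδγ, hδne, hδ, heven, hfar⟩ := hsplit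
      have heven' : Even #(γ \ δ) := by
        rw [← card_sdiff_add_card_eq_card hδγ, Nat.even_add] at hγ
        exact hγ.2 heven
      obtain ⟨𝒞, h𝒞⟩ := ih δ (hδγ.ssubset_of_ne hδ) heven
      obtain ⟨𝒬, h𝒬⟩ := ih (γ \ δ) (sdiff_ssubset hδγ hδne) heven'
      exact ⟨𝒞 ∪ 𝒬, union_sdiff_of_subset hδγ ▸ h𝒞.union h𝒬 hfar⟩
    · push Not at hsplit
      exact ⟨{γ}, by simp, by simpa using ⟨hne, hγ, hsplit⟩, by simp⟩

/-! ### The interaction -/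

/-- The coupling `|z|^{-α}` between two sites at displacement `z`. -/
def kernel (α : ℝ) (z : ℤ) : ℝ := |(z : ℝ)| ^ (-α)

lemma kernel_nonneg (α : ℝ) (z : ℤ) : 0 ≤ kernel α z := Real.rpow_nonneg (abs_nonneg _) _

lemma kernel_sub_comm (α : ℝ) (x y : ℤ) : kernel α (x - y) = kernel α (y - x) := by
  simp only [kernel, Int.cast_sub, abs_sub_comm]

lemma kernel_anti {α : ℝ} (hα : 0 ≤ α) {z w : ℤ} (hz : z ≠ 0) (hzw : |z| ≤ |w|) :
    kernel α w ≤ kernel α z :=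
  Real.rpow_le_rpow_of_nonpos (abs_pos.2 (Int.cast_ne_zero.2 hz)) (by exact_mod_cast hzw)
    (neg_nonpos.2 hα)

lemma one_div_four_pow_le_kernel {α : ℝ} (hα0 : 0 ≤ α) (hα2 : α ≤ 2) {z : ℤ} (hz : z ≠ 0) {n : ℕ}
    (hzn : |z| ≤ 2 ^ n) : (1 / 4 : ℝ) ^ n ≤ kernel α z := by
  have hpos : (0 : ℝ) < 2 ^ n := by positivity
  calc (1 / 4 : ℝ) ^ n = (2 ^ n : ℝ) ^ (-2 : ℝ) := by
        rw [Real.rpow_neg hpos.le, Real.rpow_two, ← pow_mul, mul_comm, pow_mul, one_div, inv_pow]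
        norm_num
    _ ≤ (2 ^ n : ℝ) ^ (-α) :=
        Real.rpow_le_rpow_of_exponent_le (one_le_pow₀ one_le_two) (neg_le_neg hα2)
    _ = kernel α (2 ^ n) := by simp [kernel]
    _ ≤ kernel α z := kernel_anti hα0 hz (by rwa [abs_pow, abs_two])

lemma summable_kernel_sub {α : ℝ} (hα : 1 < α) (x : ℤ) : Summable fun y => kernel α (x - y) :=
  (Real.summable_abs_int_rpow hα).comp_injective (Equiv.subLeft x).injective

/-- The total coupling between the site `x` and the sites in `S`. -/
def interaction (α : ℝ) (x : ℤ) (S : Set ℤ) : ℝ := ∑' y, S.indicator (fun y => kernel α (x - y)) y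

lemma interaction_nonneg (α : ℝ) (x : ℤ) (S : Set ℤ) : 0 ≤ interaction α x S :=
  tsum_nonneg fun _ => Set.indicator_nonneg (fun _ _ => kernel_nonneg _ _) _

lemma interaction_mono {α : ℝ} (hα : 1 < α) (x : ℤ) {S T : Set ℤ} (hST : S ⊆ T) :
    interaction α x S ≤ interaction α x T :=
  ((summable_kernel_sub hα x).indicator S).tsum_le_tsum
    (Set.indicator_le_indicator_of_subset hST fun _ => kernel_nonneg _ _)
    ((summable_kernel_sub hα x).indicator T)

lemma interaction_union_add_inter {α : ℝ} (hα : 1 < α) (x : ℤ) (S T : Set ℤ) :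
    interaction α x (S ∪ T) + interaction α x (S ∩ T) = interaction α x S + interaction α x T := by
  have hsum := fun S => (summable_kernel_sub hα x).indicator S
  simp only [interaction, ← (hsum _).tsum_add (hsum _), Set.indicator_union_add_inter_apply]

lemma interaction_union_le {α : ℝ} (hα : 1 < α) (x : ℤ) (S T : Set ℤ) :
    interaction α x (S ∪ T) ≤ interaction α x S + interaction α x T := by
  linarith [interaction_union_add_inter hα x S T, interaction_nonneg α x (S ∩ T)]

lemma interaction_coe (α : ℝ) (x : ℤ) (S : Finset ℤ) :
    interaction α x S = ∑ y ∈ S, kernel α (x - y) := by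
  rw [sum_eq_tsum_indicator]
  rfl

/-- The interaction energy between `B` and its complement. -/
def cut (α : ℝ) (B : Finset ℤ) : ℝ := ∑ x ∈ B, interaction α x (↑B)ᶜ

/-- The part of `cut α B` that is due to the pairs in `T`. -/
def cutWithin (α : ℝ) (T : Set (ℤ × ℤ)) (B : Finset ℤ) : ℝ :=
  ∑ x ∈ B, interaction α x {y | y ∉ B ∧ (x, y) ∈ T}

lemma cutWithin_univ (α : ℝ) (B : Finset ℤ) : cutWithin α Set.univ B = cut α B := by
  simp [cutWithin, cut, Set.compl_def]

lemma cut_nonneg (α : ℝ) (B : Finset ℤ) : 0 ≤ cut α B :=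
  sum_nonneg fun _ _ => interaction_nonneg _ _ _

lemma cut_eq_sum_tsum (α : ℝ) (B : Finset ℤ) :
    cut α B = ∑ x ∈ B, ∑' y : ℤ, if y ∈ B then 0 else |(x : ℝ) - (y : ℝ)| ^ (-α) := by
  refine sum_congr rfl fun x _ => tsum_congr fun y => ?_
  by_cases hy : y ∈ B <;> simp [kernel, hy]

/-- The ordered pairs of sites of which exactly one lies in `B`. -/
def separated (B : Finset ℤ) : Set (ℤ × ℤ) := {p | ¬(p.1 ∈ B ↔ p.2 ∈ B)}

lemma hasSum_cutWithin {α : ℝ} (hα : 1 < α) {T : Set (ℤ × ℤ)} (hT : ∀ p ∈ T, p.swap ∈ T)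
    (B : Finset ℤ) :
    HasSum ((separated B ∩ T).indicator fun p => kernel α (p.1 - p.2)) (2 * cutWithin α T B) := by
  classical
  set f : ℤ × ℤ → ℝ :=
    {p | p.1 ∈ B ∧ p.2 ∉ B ∧ p ∈ T}.indicator fun p => kernel α (p.1 - p.2) with hf
  have hrow : ∀ x y, f (x, y) =
      {y | x ∈ B ∧ y ∉ B ∧ (x, y) ∈ T}.indicator (fun y => kernel α (x - y)) y := fun _ _ => rfl
  have houtside : ∀ x ∉ B, ∑' y, f (x, y) = 0 := fun x hx => by simp [hrow, hx]
  have hsummable : Summable f := by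
    rw [summable_prod_of_nonneg fun _ => Set.indicator_nonneg (fun _ _ => kernel_nonneg _ _) _]
    exact ⟨fun x => (summable_kernel_sub hα x).indicator _, summable_of_ne_finset_zero houtside⟩
  have hsum : HasSum f (cutWithin α T B) := by
    convert hsummable.hasSum using 1
    rw [hsummable.tsum_prod, tsum_eq_sum houtside]
    exact sum_congr rfl fun x hx => by simp [hrow, hx, interaction]
  convert hsum.add ((Equiv.prodComm ℤ ℤ).hasSum_iff.2 hsum) using 1
  · ext ⟨x, y⟩
    have hswap : (x, y) ∈ T ↔ (y, x) ∈ T := ⟨hT _, hT _⟩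
    by_cases hx : x ∈ B <;> by_cases hy : y ∈ B <;>
      simp [hf, Set.indicator_apply, separated, hx, hy, hswap, kernel_sub_comm α x y]
  · rw [two_mul]

lemma hasSum_cut {α : ℝ} (hα : 1 < α) (B : Finset ℤ) :
    HasSum ((separated B).indicator fun p => kernel α (p.1 - p.2)) (2 * cut α B) := by
  simpa only [Set.inter_univ, cutWithin_univ] using
    hasSum_cutWithin hα (T := Set.univ) (fun _ _ => trivial) B

lemma sum_kernel_le_cut {α : ℝ} (hα : 1 < α) {B : Finset ℤ} {P : Finset (ℤ × ℤ)}
    (hP : ↑P ⊆ separated B) : ∑ p ∈ P, kernel α (p.1 - p.2) ≤ 2 * cut α B := by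
  rw [sum_congr rfl fun p hp =>
    (Set.indicator_of_mem (hP hp) fun p : ℤ × ℤ => kernel α (p.1 - p.2)).symm]
  exact sum_le_hasSum P (fun _ _ => Set.indicator_nonneg (fun _ _ => kernel_nonneg _ _) _)
    (hasSum_cut hα B)

/-- The pairs of sites whose spins agree in the configuration with minus set `A`. -/
def agreeing (A : Finset ℤ) : Set (ℤ × ℤ) := {p | p.1 ∈ A ↔ p.2 ∈ A}

/-- Flipping the spins in `B` separates exactly the pairs across the boundary of `B` which agreed
before. -/
lemma cut_add_two_mul_cutWithin_agreeing {α : ℝ} (hα : 1 < α) (A B : Finset ℤ) :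
    cut α A + 2 * cutWithin α (agreeing A) B = cut α (A ∆ B) + cut α B := by
  have hbefore := (hasSum_cut hα A).add
    ((hasSum_cutWithin hα (T := agreeing A) (fun _ => Iff.symm) B).mul_left 2)
  have hafter := (hasSum_cut hα (A ∆ B)).add (hasSum_cut hα B)
  have := hbefore.unique (by
    convert hafter using 1
    ext ⟨x, y⟩
    by_cases hxA : x ∈ A <;> by_cases hxB : x ∈ B <;> by_cases hyA : y ∈ A <;>
      by_cases hyB : y ∈ B <;>
      simp [separated, agreeing, mem_symmDiff, hxA, hxB, hyA, hyB, two_mul])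
  linarith

lemma two_mul_tsum_lt_of_symm {ι : Type*} [LinearOrder ι] {g : ι × ι → ℝ} (hg : Summable g)
    (hsymm : ∀ p, g p.swap = g p) (hdiag : ∀ x, g (x, x) = 0) :
    2 * ∑' p : ι × ι, (if p.1 < p.2 then g p else 0) = ∑' p, g p := by
  have hlt : Summable fun p : ι × ι => if p.1 < p.2 then g p else 0 :=
    (hg.indicator {p | p.1 < p.2}).congr fun p => by by_cases h : p.1 < p.2 <;> simp [h]
  have hsum := hlt.hasSum.add ((Equiv.prodComm ι ι).hasSum_iff.2 hlt.hasSum)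
  rw [two_mul, ← hsum.tsum_eq]
  refine tsum_congr fun ⟨x, y⟩ => ?_
  have hxy := hsymm (x, y)
  rcases lt_trichotomy x y with h | rfl | h <;> simp_all [not_lt_of_gt]

lemma hamJ_spinP {α : ℝ} (hα : 1 < α) (A : Finset ℤ) : hamJ α (spinP A) = 2 * cut α A := by
  set g : ℤ × ℤ → ℝ := (separated A).indicator fun p => kernel α (p.1 - p.2) with hg
  have hsum : HasSum g (2 * cut α A) := hasSum_cut hα A
  have hpair : ∀ p : ℤ × ℤ, |(p.1 : ℝ) - p.2| ^ (-α) * (1 - spinP A p.1 * spinP A p.2) =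
      2 * g p := fun p => by
    by_cases h1 : p.1 ∈ A <;> by_cases h2 : p.2 ∈ A <;>
      norm_num [hg, separated, spinP, kernel, h1, h2, mul_comm]
  have hsymm : ∀ p, g p.swap = g p := fun p => by
    simp [hg, Set.indicator_apply, separated, kernel_sub_comm α p.1, Iff.comm (a := p.1 ∈ A)]
  rw [← hsum.tsum_eq, ← two_mul_tsum_lt_of_symm hsum.summable hsymm
    fun x => by simp [hg, separated], ← tsum_mul_left]
  exact tsum_congr fun p => by rw [hpair, mul_ite, mul_zero]

lemma hamP_spinP {α : ℝ} (hα : 1 < α) (h : ℤ → ℝ) (A : Finset ℤ) :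
    hamP α h (spinP A) = 2 * (cut α A + ∑ x ∈ A, h x) := by
  have hfield : ∑' x, h x * (1 - spinP A x) = ∑ x ∈ A, 2 * h x := by
    rw [tsum_eq_sum (s := A) fun x hx => by simp [spinP, hx]]
    exact sum_congr rfl fun x hx => by simp only [spinP, if_pos hx]; ring
  rw [hamP, hamJ_spinP hα, hfield, ← mul_sum, mul_add]

lemma spinM_eq_neg_spinP (A : Finset ℤ) (x : ℤ) : spinM A x = -spinP A x := by
  by_cases hx : x ∈ A <;> simp [spinM, spinP, hx]

lemma hamM_spinM (α : ℝ) (h : ℤ → ℝ) (A : Finset ℤ) :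
    hamM α h (spinM A) = hamP α (-h) (spinP A) := by
  simp only [hamM, hamP, hamJ, spinM_eq_neg_spinP, Pi.neg_apply, neg_mul, mul_neg, neg_neg,
    tsum_neg, ← sub_eq_add_neg]

lemma avgM_eq_neg_avgP (α : ℝ) (h : ℤ → ℝ) (β : ℝ) (L : ℕ) :
    avgM α h β L = -avgP α (-h) β L := by
  simp only [avgM, avgP, hamM_spinM, spinM_eq_neg_spinP, neg_mul, sum_neg_distrib, neg_div]

/-! ### Packing numbers -/

/-- The points of `P` are at mutual distances at least `2 ^ k`. -/
def Spread (k : ℕ) (P : Finset ℤ) : Prop :=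
  (P : Set ℤ).Pairwise fun p q => (2 : ℤ) ^ k ≤ |p - q|

open Classical in
/-- The largest number of points of `γ` at mutual distances at least `2 ^ k`. -/
def packingNumber (k : ℕ) (γ : Finset ℤ) : ℕ := {P ∈ γ.powerset | Spread k P}.sup card

lemma card_le_packingNumber {ι : Type*} {k : ℕ} {γ : Finset ℤ} {s : Finset ι} {f : ι → ℤ}
    (hmaps : ∀ i ∈ s, f i ∈ γ)
    (hspread : (s : Set ι).Pairwise fun i j => (2 : ℤ) ^ k ≤ |f i - f j|) :
    #s ≤ packingNumber k γ := by
  classical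
  have hinj : Set.InjOn f s := fun i hi j hj hij => by
    by_contra hne
    have hle : (2 : ℤ) ^ k ≤ |f i - f j| := hspread hi hj hne
    rw [hij, sub_self, abs_zero] at hle
    exact hle.not_gt (by positivity)
  rw [← card_image_of_injOn hinj]
  refine le_sup (f := card) (mem_filter.2 ⟨mem_powerset.2 (image_subset_iff.2 hmaps), ?_⟩)
  rw [Spread, coe_image, hinj.pairwise_image]
  exact hspread

lemma exists_card_eq_packingNumber (k : ℕ) (γ : Finset ℤ) :
    ∃ P ⊆ γ, Spread k P ∧ #P = packingNumber k γ := by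
  classical
  have hne : {P ∈ γ.powerset | Spread k P}.Nonempty :=
    ⟨∅, mem_filter.2 ⟨empty_mem_powerset _, by simp [Spread]⟩⟩
  obtain ⟨P, hP, hcard⟩ := exists_mem_eq_sup _ hne card
  rw [mem_filter, mem_powerset] at hP
  exact ⟨P, hP.1, hP.2, hcard.symm⟩

lemma packingNumber_antitone (γ : Finset ℤ) : Antitone fun k => packingNumber k γ := by
  intro k l hkl
  obtain ⟨P, hPγ, hP, hcard⟩ := exists_card_eq_packingNumber l γ
  change packingNumber l γ ≤ packingNumber k γ
  rw [← hcard]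
  exact card_le_packingNumber (fun p hp => hPγ hp) <|
    hP.mono' fun _ _ => (pow_le_pow_right₀ one_le_two hkl).trans

/-- The number of dyadic cells of side `2 ^ k` that meet `γ`. -/
def cellCount (k : ℕ) (γ : Finset ℤ) : ℕ := #(γ.image (· / 2 ^ k))

lemma le_abs_sub_of_two_le_abs_ediv_sub_ediv {n p q : ℤ} (hn : 0 < n)
    (h : 2 ≤ |p / n - q / n|) : n ≤ |p - q| := by
  have hp := Int.mul_ediv_add_emod p n
  have hq := Int.mul_ediv_add_emod q n
  have := Int.emod_nonneg p hn.ne'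
  have := Int.emod_nonneg q hn.ne'
  have := Int.emod_lt_of_pos p hn
  have := Int.emod_lt_of_pos q hn
  rw [le_abs] at h ⊢
  rcases h with h | h
  · left; nlinarith
  · right; nlinarith

lemma card_le_packingNumber_of_two_le_abs_sub {k : ℕ} {γ S : Finset ℤ}
    (hS : S ⊆ γ.image (· / 2 ^ k)) (hsep : (S : Set ℤ).Pairwise fun a b => 2 ≤ |a - b|) :
    #S ≤ packingNumber k γ := by
  have hmem : ∀ a ∈ S, ∃ p ∈ γ, p / 2 ^ k = a := fun a ha => mem_image.1 (hS ha)
  choose! f hfγ hf using hmem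
  refine card_le_packingNumber hfγ fun a ha b hb hab => ?_
  refine le_abs_sub_of_two_le_abs_ediv_sub_ediv (by positivity) ?_
  rw [hf a ha, hf b hb]
  exact hsep ha hb hab

/-- Cells of equal parity are at distance at least their side. -/
lemma cellCount_le_two_mul_packingNumber (k : ℕ) (γ : Finset ℤ) :
    cellCount k γ ≤ 2 * packingNumber k γ := by
  rw [cellCount, ← card_filter_add_card_filter_not (fun a => Even a), two_mul]
  gcongr <;> refine card_le_packingNumber_of_two_le_abs_sub (filter_subset _ _) ?_ <;>
    intro a ha b hb hab <;> grind

/-- No point of `γ` lies at an intermediate distance from `p`. -/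
def IsIsolated (k l : ℕ) (γ : Finset ℤ) (p : ℤ) : Prop :=
  ∀ q ∈ γ, (2 : ℤ) ^ k ≤ |p - q| → (2 : ℤ) ^ l ≤ |p - q|

lemma card_add_card_le_packingNumber {k l : ℕ} (hkl : k ≤ l) {γ P Q : Finset ℤ} (hPγ : P ⊆ γ)
    (hP : Spread (l + 2) P) (hQP : Q ⊆ P) (hQ : ∀ p ∈ Q, ¬IsIsolated k l γ p) :
    #P + #Q ≤ packingNumber k γ := by
  have hnear : ∀ p ∈ Q, ∃ q ∈ γ, (2 : ℤ) ^ k ≤ |p - q| ∧ |p - q| < 2 ^ l := fun p hp => by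
    simpa only [IsIsolated, not_forall, not_le, exists_prop] using hQ p hp
  choose! f hfγ hkf hfl using hnear
  let point : ℤ ⊕ ℤ → ℤ := Sum.elim id f
  let centre : ℤ ⊕ ℤ → ℤ := Sum.elim id id
  have hcentre_mem : ∀ i ∈ P.disjSum Q, centre i ∈ P := by
    rintro (p | p) hp
    · exact inl_mem_disjSum.1 hp
    · exact hQP (inr_mem_disjSum.1 hp)
  have hdist : ∀ i ∈ P.disjSum Q, |centre i - point i| < 2 ^ l := by
    rintro (p | p) hp
    · simp [centre, point]
    · exact hfl p (inr_mem_disjSum.1 hp)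
  have hmono : (2 : ℤ) ^ k ≤ 2 ^ l := pow_le_pow_right₀ one_le_two hkl
  rw [← card_disjSum]
  refine card_le_packingNumber (f := point) ?_ fun i hi j hj hij => ?_
  · rintro (p | p) hp
    · exact hPγ (inl_mem_disjSum.1 hp)
    · exact hfγ p (inr_mem_disjSum.1 hp)
  by_cases hc : centre i = centre j
  · rcases i with p | p <;> rcases j with q | q <;> obtain rfl : p = q := hc
    · exact absurd rfl hij
    · exact hkf p (inr_mem_disjSum.1 hj)
    · exact abs_sub_comm p (f p) ▸ hkf p (inr_mem_disjSum.1 hi)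
    · exact absurd rfl hij
  · have hfar : (2 : ℤ) ^ (l + 2) ≤ |centre i - centre j| :=
      hP (hcentre_mem i hi) (hcentre_mem j hj) hc
    have hi := hdist i hi
    have hj := hdist j hj
    grind

/-- In a spread-out set, every point that is not isolated accounts for a second point at a smaller
scale. -/
lemma exists_isolated {k l : ℕ} (hkl : k ≤ l) (γ : Finset ℤ) :
    ∃ O ⊆ γ, Spread (l + 2) O ∧ (∀ p ∈ O, IsIsolated k l γ p) ∧
      2 * packingNumber (l + 2) γ ≤ packingNumber k γ + #O := by
  classical
  obtain ⟨P, hPγ, hP, hcard⟩ := exists_card_eq_packingNumber (l + 2) γ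
  refine ⟨{p ∈ P | IsIsolated k l γ p}, (filter_subset _ _).trans hPγ,
    hP.mono (filter_subset _ _), fun p hp => (mem_filter.1 hp).2, ?_⟩
  have hsplit := card_filter_add_card_filter_not (s := P) (IsIsolated k l γ)
  have hcrowded := card_add_card_le_packingNumber hkl hPγ hP
    (filter_subset (fun p => ¬IsIsolated k l γ p) P) fun p hp => (mem_filter.1 hp).2
  lia

/-! ### The energy of a contour -/

/-- Pairs of sites on opposite sides of `p`, at distances from `p` comparable to `2 ^ k`. -/
def sidePairs (k : ℕ) (p : ℤ) : Finset (ℤ × ℤ) :=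
  Ioc (p - 2 ^ (k + 1)) (p - 2 ^ k) ×ˢ Ico (p + 2 ^ k) (p + 2 ^ (k + 1))

lemma mem_sidePairs {k : ℕ} {p : ℤ} {z : ℤ × ℤ} : z ∈ sidePairs k p ↔
    (p - 2 ^ (k + 1) < z.1 ∧ z.1 ≤ p - 2 ^ k) ∧ p + 2 ^ k ≤ z.2 ∧ z.2 < p + 2 ^ (k + 1) := by
  rw [sidePairs, mem_product, mem_Ioc, mem_Ico]

lemma card_sidePairs (k : ℕ) (p : ℤ) : #(sidePairs k p) = 4 ^ k := by
  have hleft : p - 2 ^ k - (p - 2 ^ (k + 1)) = 2 ^ k := by ring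
  have hright : p + 2 ^ (k + 1) - (p + 2 ^ k) = 2 ^ k := by ring
  rw [sidePairs, card_product, Int.card_Ioc, Int.card_Ico, hleft, hright,
    Int.toNat_pow_of_nonneg zero_le_two, ← mul_pow]
  rfl

lemma sub_mem_Ico_of_mem_sidePairs {k : ℕ} {p : ℤ} {z : ℤ × ℤ} (hz : z ∈ sidePairs k p) :
    z.2 - z.1 ∈ Set.Ico ((2 : ℤ) ^ (k + 1)) (2 ^ (k + 2)) := by
  rw [mem_sidePairs] at hz
  constructor <;> grind

lemma disjoint_sidePairs {k l : ℕ} {p q : ℤ} (h : k = l → (2 : ℤ) ^ k ≤ |p - q|) :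
    Disjoint (sidePairs k p) (sidePairs l q) := by
  refine disjoint_left.2 fun z hz hz' => ?_
  have hk := sub_mem_Ico_of_mem_sidePairs hz
  have hl := sub_mem_Ico_of_mem_sidePairs hz'
  rcases lt_trichotomy k l with hkl | rfl | hkl
  · have : (2 : ℤ) ^ (k + 2) ≤ 2 ^ (l + 1) := pow_le_pow_right₀ one_le_two (by lia)
    linarith [hk.2, hl.1]
  · rw [mem_sidePairs] at hz hz'
    have := h rfl
    grind
  · have : (2 : ℤ) ^ (l + 2) ≤ 2 ^ (k + 1) := pow_le_pow_right₀ one_le_two (by lia)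
    linarith [hk.1, hl.2]

lemma one_div_sixteen_le_sum_sidePairs {α : ℝ} (hα0 : 0 ≤ α) (hα2 : α ≤ 2) (k : ℕ) (p : ℤ) :
    (1 / 16 : ℝ) ≤ ∑ z ∈ sidePairs k p, kernel α (z.1 - z.2) := by
  have hkernel : ∀ z ∈ sidePairs k p, (1 / 4 : ℝ) ^ (k + 2) ≤ kernel α (z.1 - z.2) := by
    intro z hz
    obtain ⟨hlower, hupper⟩ := sub_mem_Ico_of_mem_sidePairs hz
    have hpos : 0 < z.2 - z.1 := lt_of_lt_of_le (by positivity) hlower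
    rw [kernel_sub_comm]
    exact one_div_four_pow_le_kernel hα0 hα2 hpos.ne' (by rw [abs_of_pos hpos]; exact hupper.le)
  refine le_trans (le_of_eq ?_) (card_nsmul_le_sum _ _ _ hkernel)
  have hcancel : (4 : ℝ) ^ k * (1 / 4) ^ k = 1 := by rw [← mul_pow]; norm_num
  rw [card_sidePairs, nsmul_eq_mul, Nat.cast_pow, Nat.cast_ofNat, pow_add, ← mul_assoc, hcancel]
  norm_num

section Isolated

variable {m k : ℕ} {γ : Finset ℤ} {p : ℤ}

/-- Otherwise the flips near `p` could be split off `γ`. -/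
lemma IsIsolated.odd_card (hγ : IsContour m γ) (hk : k < scale γ) (hp : p ∈ γ)
    (hiso : IsIsolated k (reach m k + 2) γ p) : Odd #{q ∈ γ | |p - q| < 2 ^ k} := by
  set δ : Finset ℤ := {q ∈ γ | |p - q| < 2 ^ k}
  have hscale : scale δ ≤ k := scale_le fun a ha b hb => by
    have hpa := (mem_filter.1 ha).2
    have hpb := (mem_filter.1 hb).2
    grind
  rw [← Nat.not_even_iff_odd]
  refine fun heven => hγ.irreducible δ (filter_subset _ _) ⟨p, mem_filter.2 ⟨hp, by simp⟩⟩
    (fun h => hk.not_ge (h ▸ hscale)) heven fun a ha b hb => ?_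
  rw [mem_sdiff] at hb
  have hpa : |p - a| < 2 ^ k := (mem_filter.1 ha).2
  have hpb : (2 : ℤ) ^ (reach m k + 2) ≤ |p - b| :=
    hiso b hb.1 (not_lt.1 fun h => hb.2 (mem_filter.2 ⟨hb.1, h⟩))
  have hreach : (2 : ℤ) ^ k ≤ 2 ^ reach m k :=
    pow_le_pow_right₀ one_le_two (by unfold reach; lia)
  calc (2 : ℤ) ^ (reach m (min (scale δ) (scale (γ \ δ))) + 1)
      ≤ 2 ^ (reach m k + 1) := pow_le_pow_right₀ one_le_two
        (Nat.succ_le_succ (reach_mono m ((min_le_left _ _).trans hscale)))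
    _ ≤ |a - b| := by grind

lemma IsIsolated.sidePairs_subset_separated (hγ : IsContour m γ) (hk : k < scale γ) (hp : p ∈ γ)
    (hiso : IsIsolated k (reach m k + 2) γ p) :
    ↑(sidePairs k p) ⊆ separated (enclosed γ) := by
  intro z hz
  rw [mem_coe, mem_sidePairs] at hz
  have hpos : (0 : ℤ) < 2 ^ k := by positivity
  have hreach : (2 : ℤ) ^ (k + 1) ≤ 2 ^ (reach m k + 2) :=
    pow_le_pow_right₀ one_le_two (by unfold reach; lia)
  have hbetween : {q ∈ γ | q ∈ Ioc z.1 z.2} = {q ∈ γ | |p - q| < 2 ^ k} := by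
    refine filter_congr fun q hq => ?_
    have := hiso q hq
    grind
  change ¬(z.1 ∈ enclosed γ ↔ z.2 ∈ enclosed γ)
  rw [mem_enclosed_iff_mem_enclosed hγ.even_card (by linarith), hbetween, Nat.not_even_iff_odd]
  exact hiso.odd_card hγ hk hp

end Isolated

lemma sum_card_isolated_le_cut {α : ℝ} (hα1 : 1 < α) (hα2 : α ≤ 2) {m : ℕ} {γ : Finset ℤ}
    (hγ : IsContour m γ) {O : ℕ → Finset ℤ} (hO : ∀ k, O k ⊆ γ) (hspread : ∀ k, Spread k (O k))
    (hiso : ∀ k, ∀ p ∈ O k, IsIsolated k (reach m k + 2) γ p) :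
    ∑ k ∈ range (scale γ), (#(O k) : ℝ) ≤ 32 * cut α (enclosed γ) := by
  have hα0 : 0 ≤ α := by linarith
  set I : Finset (Σ _ : ℕ, ℤ) := (range (scale γ)).sigma O with hI
  have hdisjoint : (I : Set (Σ _ : ℕ, ℤ)).PairwiseDisjoint fun i => sidePairs i.1 i.2 := by
    rintro ⟨k, p⟩ hp ⟨l, q⟩ hq hne
    rw [mem_coe, mem_sigma] at hp hq
    refine disjoint_sidePairs ?_
    rintro rfl
    exact hspread k hp.2 hq.2 fun h => hne (Sigma.ext rfl (heq_of_eq h))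
  have hseparated : ↑(I.biUnion fun i => sidePairs i.1 i.2) ⊆ separated (enclosed γ) := by
    rw [coe_biUnion, Set.iUnion₂_subset_iff]
    rintro ⟨k, p⟩ hp
    rw [mem_coe, mem_sigma, mem_range] at hp
    exact (hiso k p hp.2).sidePairs_subset_separated hγ hp.1 (hO k hp.2)
  have hcard : (#I : ℝ) * (1 / 16) ≤ 2 * cut α (enclosed γ) :=
    calc (#I : ℝ) * (1 / 16) ≤ ∑ i ∈ I, ∑ z ∈ sidePairs i.1 i.2, kernel α (z.1 - z.2) := by
          rw [← nsmul_eq_mul]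
          exact card_nsmul_le_sum _ _ _ fun i _ => one_div_sixteen_le_sum_sidePairs hα0 hα2 i.1 i.2
      _ = ∑ z ∈ I.biUnion fun i => sidePairs i.1 i.2, kernel α (z.1 - z.2) :=
          (sum_biUnion hdisjoint).symm
      _ ≤ 2 * cut α (enclosed γ) := sum_kernel_le_cut hα1 hseparated
  rw [hI, card_sigma, Nat.cast_sum] at hcard
  linarith

lemma card_le_cut {α : ℝ} (hα : 1 < α) {γ : Finset ℤ} (hγ : Even #γ) :
    (#γ : ℝ) ≤ 2 * cut α (enclosed γ) := by
  have hseparated : ↑(γ.image fun p => (p - 1, p)) ⊆ separated (enclosed γ) := by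
    intro z hz
    obtain ⟨p, hp, rfl⟩ := mem_image.1 (mem_coe.1 hz)
    have hbetween : {q ∈ γ | q ∈ Ioc (p - 1) p} = {p} := by ext q; grind
    change ¬(p - 1 ∈ enclosed γ ↔ p ∈ enclosed γ)
    rw [mem_enclosed_iff_mem_enclosed hγ (by simp), hbetween, card_singleton]
    exact Nat.not_even_one
  have hsum := sum_kernel_le_cut hα hseparated
  rw [sum_image fun a _ b _ hab => (Prod.ext_iff.1 hab).2] at hsum
  simpa [kernel] using hsum

lemma sum_range_mul {M : Type*} [AddCommMonoid M] (f : ℕ → M) (d n : ℕ) :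
    ∑ j ∈ range (d * n), f j = ∑ i ∈ range n, ∑ j ∈ range d, f (d * i + j) := by
  induction n with
  | zero => simp
  | succ n ih => rw [mul_add_one, sum_range_add, ih, sum_range_succ]

/-- The blocks of three indices starting at `C + 3 * i` are compared with the blocks of two indices
starting at `2 * i`, which loses a factor `3 / 4`. -/
lemma sum_range_le_of_halving {a o : ℕ → ℝ} (ha : Antitone a) (ha0 : ∀ k, 0 ≤ a k)
    (ho : ∀ k, 0 ≤ o k) {C n : ℕ} (hC : 3 ≤ C)
    (h : ∀ k < n, 2 * a (C + (k + k / 2)) ≤ a k + o k) :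
    ∑ j ∈ range (n + 2), a j ≤ 4 * (C * a 0 + ∑ k ∈ range n, o k) := by
  have hhead : ∑ j ∈ range C, a j ≤ C * a 0 := by
    simpa using sum_le_card_nsmul (range C) a (a 0) fun k _ => ha k.zero_le
  have hblock : ∀ i ∈ range (n / 2), ∑ j ∈ range 3, a (C + (3 * i + j)) ≤
      3 / 4 * ∑ j ∈ range 2, a (2 * i + j) + ∑ j ∈ range 2, o (2 * i + j) := by
    intro i hi
    rw [mem_range] at hi
    have heven := h (2 * i) (by lia)
    have hodd := h (2 * i + 1) (by lia)
    rw [show 2 * i + 2 * i / 2 = 3 * i by lia] at heven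
    rw [show 2 * i + 1 + (2 * i + 1) / 2 = 3 * i + 1 by lia] at hodd
    have hlast : a (C + (3 * i + 2)) ≤ a (C + (3 * i + 1)) := ha (by lia)
    have hpair : a (2 * i + 1) ≤ a (2 * i) := ha (by lia)
    simp only [sum_range_succ, range_zero, sum_empty, zero_add, add_zero]
    linarith [ho (2 * i)]
  have hblocks := sum_le_sum hblock
  rw [sum_add_distrib, ← mul_sum, ← sum_range_mul, ← sum_range_mul,
    ← sum_range_mul fun j => a (C + j)] at hblocks
  have hsplit := sum_range_add a C (3 * (n / 2))
  have hrange {b : ℕ → ℝ} (hb : ∀ k, 0 ≤ b k) {k l : ℕ} (hkl : k ≤ l) :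
      ∑ j ∈ range k, b j ≤ ∑ j ∈ range l, b j :=
    sum_le_sum_of_subset_of_nonneg (range_mono hkl) fun j _ _ => hb j
  linarith [hrange ha0 (show n + 2 ≤ C + 3 * (n / 2) by lia),
    hrange ha0 (show 2 * (n / 2) ≤ C + 3 * (n / 2) by lia), hrange ho (show 2 * (n / 2) ≤ n by lia)]

/-- The number of dyadic cells that meet `γ`, over all sides `2 ^ k` with `k ≤ scale γ + 1`. It
measures both the energy of a contour and the information needed to describe it. -/
def totalCells (γ : Finset ℤ) : ℕ := ∑ k ∈ range (scale γ + 2), cellCount k γ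

lemma packingNumber_le_card (k : ℕ) (γ : Finset ℤ) : packingNumber k γ ≤ #γ := by
  obtain ⟨P, hPγ, -, hcard⟩ := exists_card_eq_packingNumber k γ
  exact hcard ▸ card_le_card hPγ

lemma totalCells_le_cut {α : ℝ} (hα1 : 1 < α) (hα2 : α ≤ 2) {m : ℕ} {γ : Finset ℤ}
    (hγ : IsContour m γ) : (totalCells γ : ℝ) ≤ 16 * (m + 21) * cut α (enclosed γ) := by
  choose O hOγ hspread hiso hcard using fun k =>
    exists_isolated (show k ≤ reach m k + 2 by unfold reach; lia) γ
  have hspread' : ∀ k, Spread k (O k) := fun k => (hspread k).mono' fun _ _ =>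
    (pow_le_pow_right₀ one_le_two (by unfold reach; lia)).trans
  have hsum := sum_range_le_of_halving (a := fun k => (packingNumber k γ : ℝ))
    (o := fun k => (#(O k) : ℝ)) (C := m + 5) (n := scale γ)
    (fun _ _ hkl => Nat.cast_le.2 (packingNumber_antitone γ hkl)) (fun _ => Nat.cast_nonneg _)
    (fun _ => Nat.cast_nonneg _) (by lia) fun k _ => by
      have hk := hcard k
      rw [show reach m k + 2 + 2 = m + 5 + (k + k / 2) by unfold reach; lia] at hk
      exact_mod_cast hk
  have hisolated := sum_card_isolated_le_cut hα1 hα2 hγ hOγ hspread' hiso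
  have hcells : (totalCells γ : ℝ) ≤ 2 * ∑ k ∈ range (scale γ + 2), (packingNumber k γ : ℝ) := by
    rw [mul_sum, totalCells, Nat.cast_sum]
    exact sum_le_sum fun k _ => by exact_mod_cast cellCount_le_two_mul_packingNumber k γ
  have hpacking : ((m + 5 : ℕ) : ℝ) * packingNumber 0 γ ≤ (m + 5 : ℕ) * (2 * cut α (enclosed γ)) :=
    mul_le_mul_of_nonneg_left ((Nat.cast_le.2 (packingNumber_le_card 0 γ)).trans
      (card_le_cut hα1 hγ.even_card)) (Nat.cast_nonneg _)
  push_cast at hsum hpacking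
  linarith

/-! ### Compensation by the other contours -/

lemma exists_mem_uIoc_of_not_mem_enclosed_iff {γ : Finset ℤ} (hγ : Even #γ) {x y : ℤ}
    (h : ¬(x ∈ enclosed γ ↔ y ∈ enclosed γ)) : ∃ q ∈ γ, q ∈ Set.uIoc x y := by
  wlog hxy : x ≤ y generalizing x y
  · rw [Set.uIoc_comm]
    exact this (fun h' => h h'.symm) (le_of_not_ge hxy)
  rw [mem_enclosed_iff_mem_enclosed hγ hxy, Nat.not_even_iff_odd] at h
  obtain ⟨q, hq⟩ := card_pos.1 h.pos
  rw [mem_filter, mem_Ioc] at hq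
  exact ⟨q, hq.1, by rw [Set.uIoc_of_le hxy]; exact hq.2⟩

/-- The sites close to `δ`: less than half as far as any contour of larger scale. -/
def collar (m : ℕ) (δ : Finset ℤ) : Set ℤ := {u | ∃ p ∈ δ, |u - p| < 2 ^ reach m (scale δ)}

lemma two_pow_scale_le_two_pow_reach (m s : ℕ) : (2 : ℤ) ^ (s + 1) ≤ 2 ^ reach m s :=
  pow_le_pow_right₀ one_le_two (by unfold reach; lia)

lemma mem_collar_of_mem_Ico {m : ℕ} {δ : Finset ℤ} {p q u : ℤ} (hp : p ∈ δ) (hq : q ∈ δ)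
    (hu : u ∈ Ico p q) : u ∈ collar m δ := by
  have := abs_sub_lt_two_pow_scale hp hq
  have := two_pow_scale_le_two_pow_reach m (scale δ)
  exact ⟨p, hp, by grind⟩

lemma enclosed_subset_collar (m : ℕ) (δ : Finset ℤ) : ↑(enclosed δ) ⊆ collar m δ := fun u hu => by
  obtain ⟨p, hp, q, hq, hpu, huq⟩ := exists_le_lt_of_mem_enclosed hu
  exact mem_collar_of_mem_Ico hp hq (mem_Ico.2 ⟨hpu, huq⟩)

lemma enclosed_subset_Ico {δ : Finset ℤ} (hδ : δ.Nonempty) :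
    enclosed δ ⊆ Ico (δ.min' hδ) (δ.max' hδ) := fun v hv => by
  obtain ⟨p, hp, q, hq, hpv, hvq⟩ := exists_le_lt_of_mem_enclosed hv
  exact mem_Ico.2 ⟨(δ.min'_le p hp).trans hpv, hvq.trans_le (δ.le_max' q hq)⟩

/-- The buffer is an interval of length `2 ^ reach m (scale δ)` next to `δ`, on the side of `w`. -/
lemma exists_buffer {α : ℝ} (hα : 0 ≤ α) {m : ℕ} {δ : Finset ℤ} (hδ : δ.Nonempty) {w : ℤ}
    (hw : w ∉ collar m δ) : ∃ U : Finset ℤ, ↑U ⊆ collar m δ ∧ #U = 2 ^ reach m (scale δ) ∧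
      ∀ v ∈ enclosed δ, ∀ u ∈ U, kernel α (w - v) ≤ kernel α (w - u) := by
  set a := δ.min' hδ
  set b := δ.max' hδ
  have ha : a ∈ δ := δ.min'_mem hδ
  have hb : b ∈ δ := δ.max'_mem hδ
  have henclosed : ∀ v ∈ enclosed δ, a ≤ v ∧ v < b := fun v hv =>
    mem_Ico.1 (enclosed_subset_Ico hδ hv)
  have hR : ((2 : ℤ) ^ reach m (scale δ)).toNat = 2 ^ reach m (scale δ) :=
    Int.toNat_pow_of_nonneg zero_le_two _
  have hwfar : ∀ p ∈ δ, 2 ^ reach m (scale δ) ≤ |w - p| := fun p hp =>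
    not_lt.1 fun h => hw ⟨p, hp, h⟩
  have hwa := hwfar a ha
  have hwb := hwfar b hb
  have hwab : ¬(a ≤ w ∧ w < b) := fun h => hw (mem_collar_of_mem_Ico ha hb (mem_Ico.2 h))
  rcases lt_or_ge w a with hwa' | hwa'
  · refine ⟨Ioc (a - 2 ^ reach m (scale δ)) a, fun u hu => ⟨a, ha, ?_⟩, ?_, fun v hv u hu => ?_⟩
    · rw [mem_coe] at hu
      grind
    · rw [Int.card_Ioc, sub_sub_cancel, hR]
    · have := henclosed v hv
      exact kernel_anti hα (by grind) (by grind)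
  · refine ⟨Ico b (b + 2 ^ reach m (scale δ)), fun u hu => ⟨b, hb, ?_⟩, ?_, fun v hv u hu => ?_⟩
    · rw [mem_coe] at hu
      grind
    · rw [Int.card_Ico, add_sub_cancel_left, hR]
    · have := henclosed v hv
      exact kernel_anti hα (by grind) (by grind)

lemma card_enclosed_le (δ : Finset ℤ) : #(enclosed δ) ≤ 2 ^ (scale δ + 1) := by
  rcases δ.eq_empty_or_nonempty with rfl | hδ
  · simp [enclosed]
  refine (card_le_card (enclosed_subset_Ico hδ)).trans ?_
  rw [Int.card_Ico]
  have := le_of_abs_le (abs_sub_lt_two_pow_scale (δ.max'_mem hδ) (δ.min'_mem hδ)).le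
  rw [Int.toNat_le]
  exact_mod_cast this

lemma interaction_enclosed_le {α : ℝ} (hα : 1 < α) {m : ℕ} {δ : Finset ℤ} {w : ℤ}
    (hw : w ∉ collar m δ) : interaction α w (enclosed δ) ≤
      (1 / 2) ^ m * (1 / 2) ^ (scale δ / 2) * interaction α w (collar m δ) := by
  rcases δ.eq_empty_or_nonempty with rfl | hδ
  · simp [enclosed, interaction, collar]
  obtain ⟨U, hU, hcard, hkernel⟩ := exists_buffer (by linarith) hδ hw
  have hUsum : ∑ u ∈ U, kernel α (w - u) ≤ interaction α w (collar m δ) :=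
    interaction_coe α w U ▸ interaction_mono hα w hU
  have hcompare : (2 : ℝ) ^ reach m (scale δ) * interaction α w (enclosed δ) ≤
      2 ^ (scale δ + 1) * interaction α w (collar m δ) :=
    calc (2 : ℝ) ^ reach m (scale δ) * interaction α w (enclosed δ)
        = ∑ v ∈ enclosed δ, ∑ _u ∈ U, kernel α (w - v) := by
          simp [interaction_coe, hcard, mul_sum]
      _ ≤ ∑ _v ∈ enclosed δ, ∑ u ∈ U, kernel α (w - u) :=
          sum_le_sum fun v hv => sum_le_sum fun u hu => hkernel v hv u hu
      _ = #(enclosed δ) * ∑ u ∈ U, kernel α (w - u) := by simp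
      _ ≤ 2 ^ (scale δ + 1) * interaction α w (collar m δ) := by
          gcongr
          · exact sum_nonneg fun _ _ => kernel_nonneg _ _
          · exact_mod_cast card_enclosed_le δ
  have hsplit : (2 : ℝ) ^ reach m (scale δ) = 2 ^ (scale δ + 1) * (2 ^ m * 2 ^ (scale δ / 2)) := by
    rw [reach]; ring
  rw [hsplit, mul_assoc] at hcompare
  rw [one_div_pow, one_div_pow, one_div_mul_one_div, one_div_mul_eq_div,
    le_div_iff₀ (by positivity), mul_comm]
  exact le_of_mul_le_mul_left hcompare (by positivity)

lemma interaction_biUnion_le {α : ℝ} (hα : 1 < α) (x : ℤ) {ι : Type*} (𝒬 : Finset ι)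
    (S : ι → Finset ℤ) :
    interaction α x (𝒬.biUnion S) ≤ ∑ i ∈ 𝒬, interaction α x (S i) := by
  classical
  induction 𝒬 using Finset.induction_on with
  | empty => simp [interaction]
  | insert i 𝒬 hi ih =>
    rw [biUnion_insert, coe_union, sum_insert hi]
    exact (interaction_union_le hα x _ _).trans (by gcongr)

lemma sum_one_half_pow_half_le (s : Finset ℕ) : ∑ i ∈ s, (1 / 2 : ℝ) ^ (i / 2) ≤ 4 := by
  obtain ⟨N, hN⟩ := exists_nat_subset_range s
  have hblock : ∀ i, ∑ j ∈ range 2, (1 / 2 : ℝ) ^ ((2 * i + j) / 2) = 2 * (1 / 2) ^ i := fun i => by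
    rw [sum_range_succ, sum_range_one, add_zero, show (2 * i) / 2 = i by lia,
      show (2 * i + 1) / 2 = i by lia, two_mul]
  calc ∑ i ∈ s, (1 / 2 : ℝ) ^ (i / 2) ≤ ∑ i ∈ range (2 * N), (1 / 2 : ℝ) ^ (i / 2) :=
        sum_le_sum_of_subset_of_nonneg (hN.trans (range_mono (by lia))) fun _ _ _ => by positivity
    _ = 2 * ∑ i ∈ range N, (1 / 2 : ℝ) ^ i := by
        rw [sum_range_mul, mul_sum, sum_congr rfl fun i _ => hblock i]
    _ ≤ 4 := by linarith [sum_geometric_two_le N]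

lemma disjoint_collar {m : ℕ} {γ δ : Finset ℤ} (hfar : FarApart m γ δ)
    (hscale : scale γ = scale δ) :
    Disjoint (collar m γ) (collar m δ) := by
  rw [Set.disjoint_left]
  rintro u ⟨p, hp, hup⟩ ⟨q, hq, huq⟩
  have := hfar p hp q hq
  rw [← hscale] at huq
  rw [← hscale, min_self] at this
  grind

open Classical in
/-- Every site lies in at most one collar of each scale. -/
lemma sum_collar_le {m : ℕ} {𝒬 : Finset (Finset ℤ)}
    (hfar : (𝒬 : Set (Finset ℤ)).Pairwise (FarApart m)) (u : ℤ) :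
    ∑ δ ∈ 𝒬 with u ∈ collar m δ, (1 / 2 : ℝ) ^ (scale δ / 2) ≤ 4 := by
  have hinj : Set.InjOn scale ({δ ∈ 𝒬 | u ∈ collar m δ} : Finset (Finset ℤ)) := by
    intro γ hγ δ hδ hscale
    rw [mem_coe, mem_filter] at hγ hδ
    by_contra hne
    exact Set.disjoint_left.1 (disjoint_collar (hfar hγ.1 hδ.1 hne) hscale) hγ.2 hδ.2
  rw [← sum_image (f := fun i => (1 / 2 : ℝ) ^ (i / 2)) hinj]
  exact sum_one_half_pow_half_le _

lemma sum_indicator_collar_le {α : ℝ} {m : ℕ} {𝒬 : Finset (Finset ℤ)}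
    (hfar : (𝒬 : Set (Finset ℤ)).Pairwise (FarApart m)) (w u : ℤ) :
    ∑ δ ∈ 𝒬, (1 / 2) ^ (scale δ / 2) * (collar m δ).indicator (fun u => kernel α (w - u)) u ≤
      4 * kernel α (w - u) := by
  classical
  calc ∑ δ ∈ 𝒬, (1 / 2) ^ (scale δ / 2) * (collar m δ).indicator (fun u => kernel α (w - u)) u
      = (∑ δ ∈ 𝒬 with u ∈ collar m δ, (1 / 2) ^ (scale δ / 2)) * kernel α (w - u) := by
        rw [sum_filter, sum_mul]
        refine sum_congr rfl fun δ _ => ?_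
        rw [Set.indicator_apply, ite_mul, mul_ite, zero_mul, mul_zero]
    _ ≤ 4 * kernel α (w - u) :=
        mul_le_mul_of_nonneg_right (sum_collar_le hfar u) (kernel_nonneg _ _)

lemma interaction_biUnion_enclosed_le {α : ℝ} (hα : 1 < α) {m : ℕ} {𝒬 : Finset (Finset ℤ)}
    (hfar : (𝒬 : Set (Finset ℤ)).Pairwise (FarApart m)) {W : Set ℤ}
    (hW : ∀ δ ∈ 𝒬, collar m δ ⊆ W) {w : ℤ} (hw : w ∉ W) :
    interaction α w (𝒬.biUnion enclosed) ≤ 4 * (1 / 2) ^ m * interaction α w W := by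
  have hsummable := fun S : Set ℤ => (summable_kernel_sub hα w).indicator S
  have hpointwise : ∀ u, ∑ δ ∈ 𝒬, (1 / 2 : ℝ) ^ (scale δ / 2) *
      (collar m δ).indicator (fun u => kernel α (w - u)) u ≤
        4 * W.indicator (fun u => kernel α (w - u)) u := fun u => by
    by_cases hu : u ∈ W
    · rw [Set.indicator_of_mem hu]
      exact sum_indicator_collar_le hfar w u
    · have houtside : ∀ δ ∈ 𝒬, u ∉ collar m δ := fun δ hδ h => hu (hW δ hδ h)
      rw [Set.indicator_of_notMem hu, mul_zero]
      exact (sum_eq_zero fun δ hδ => by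
        rw [Set.indicator_of_notMem (houtside δ hδ), mul_zero]).le
  calc interaction α w (𝒬.biUnion enclosed)
      ≤ ∑ δ ∈ 𝒬, interaction α w (enclosed δ) := interaction_biUnion_le hα w 𝒬 enclosed
    _ ≤ ∑ δ ∈ 𝒬, (1 / 2) ^ m * (1 / 2) ^ (scale δ / 2) * interaction α w (collar m δ) :=
        sum_le_sum fun δ hδ => interaction_enclosed_le hα fun h => hw (hW δ hδ h)
    _ = (1 / 2) ^ m * ∑' u, ∑ δ ∈ 𝒬, (1 / 2) ^ (scale δ / 2) *
          (collar m δ).indicator (fun u => kernel α (w - u)) u := by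
        rw [Summable.tsum_finsetSum fun δ _ => (hsummable _).mul_left _, mul_sum]
        exact sum_congr rfl fun δ _ => by rw [tsum_mul_left, mul_assoc, interaction]
    _ ≤ (1 / 2) ^ m * ∑' u, 4 * W.indicator (fun u => kernel α (w - u)) u := by
        refine mul_le_mul_of_nonneg_left ?_ (by positivity)
        exact Summable.tsum_le_tsum hpointwise
          (summable_sum fun δ _ => (hsummable _).mul_left _) ((hsummable W).mul_left _)
    _ = 4 * (1 / 2) ^ m * interaction α w W := by rw [tsum_mul_left, interaction]; ring

lemma interaction_range {α : ℝ} {ι : Type*} {f : ι → ℤ} (hf : f.Injective) (x : ℤ) :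
    interaction α x (Set.range f) = ∑' i, kernel α (x - f i) := by
  rw [interaction, ← _root_.tsum_subtype]
  exact tsum_range (fun y => kernel α (x - y)) hf

lemma interaction_distant {α : ℝ} (hα : 1 < α) {r : ℕ} (hr : 0 < r) (x : ℤ) :
    interaction α x {y | (r : ℤ) ≤ |x - y|} = 2 * ∑' k : ℕ, kernel α (r + k) := by
  set left : ℕ → ℤ := fun k => x - (r + k) with hleft
  set right : ℕ → ℤ := fun k => x + (r + k) with hright
  have hunion : {y | (r : ℤ) ≤ |x - y|} = Set.range left ∪ Set.range right := by
    ext y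
    refine ⟨fun hy => ?_, ?_⟩
    · rcases le_total y x with hyx | hyx
      · exact .inl ⟨(x - y - r).toNat, by grind⟩
      · exact .inr ⟨(y - x - r).toNat, by grind⟩
    · rintro (⟨k, rfl⟩ | ⟨k, rfl⟩) <;> grind
  have hinter : Set.range left ∩ Set.range right = ∅ :=
    Set.disjoint_iff_inter_eq_empty.1 <| Set.disjoint_left.2 <| by
      rintro _ ⟨k, rfl⟩ ⟨l, hl⟩
      grind
  have hsplit := interaction_union_add_inter hα x (Set.range left) (Set.range right)
  have hrange_left : interaction α x (Set.range left) = ∑' k : ℕ, kernel α (r + k) := by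
    rw [interaction_range fun k l h => by grind]
    exact tsum_congr fun k => by rw [hleft, sub_sub_cancel]
  have hrange_right : interaction α x (Set.range right) = ∑' k : ℕ, kernel α (r + k) := by
    rw [interaction_range fun k l h => by grind]
    exact tsum_congr fun k => by rw [kernel_sub_comm, hright, add_sub_cancel_left]
  rw [hinter, ← hunion, hrange_left, hrange_right] at hsplit
  simpa [interaction, two_mul] using hsplit

lemma kernel_mul (α : ℝ) (n : ℕ) (z : ℤ) : kernel α (n * z) = (n : ℝ) ^ (-α) * kernel α z := by
  simp only [kernel, Int.cast_mul, Int.cast_natCast, abs_mul, Nat.abs_cast,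
    Real.mul_rpow n.cast_nonneg (abs_nonneg _)]

lemma tsum_kernel_mul_add_le {α : ℝ} (hα : 1 < α) {n r : ℕ} (hn : 0 < n) (hr : 0 < r) :
    ∑' k : ℕ, kernel α (n * r + k) ≤ (n : ℝ) ^ (1 - α) * ∑' k : ℕ, kernel α (r + k) := by
  have : NeZero n := ⟨hn.ne'⟩
  have hsummable : ∀ s : ℤ, Summable fun k : ℕ => kernel α (s + k) := fun s => by
    simpa only [Function.comp_def, sub_neg_eq_add] using (summable_kernel_sub hα s).comp_injective
      (neg_injective.comp Nat.cast_injective)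
  have hterm : ∀ p : ℕ × Fin n,
      kernel α (n * r + (p.1 * n + p.2 : ℕ)) ≤ (n : ℝ) ^ (-α) * kernel α (r + p.1) := fun p => by
    rw [← kernel_mul]
    refine kernel_anti (by linarith) (by positivity) ?_
    rw [abs_of_nonneg (by positivity), abs_of_nonneg (by positivity)]
    push_cast
    linarith [p.2.1.cast_nonneg (α := ℤ)]
  have hcell : ∀ k : ℕ, HasSum (fun _ : Fin n => (n : ℝ) ^ (-α) * kernel α (r + k))
      ((n : ℝ) ^ (1 - α) * kernel α (r + k)) := fun k => by
    convert hasSum_fintype _ using 1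
    rw [sum_const, card_univ, Fintype.card_fin, nsmul_eq_mul, ← mul_assoc, sub_eq_add_neg,
      Real.rpow_add (by positivity), Real.rpow_one]
  have hbound : Summable fun p : ℕ × Fin n => (n : ℝ) ^ (-α) * kernel α (r + p.1) := by
    rw [summable_prod_of_nonneg fun _ => mul_nonneg (by positivity) (kernel_nonneg _ _)]
    refine ⟨fun k => (hcell k).summable, ?_⟩
    simpa only [(hcell _).tsum_eq] using (hsummable r).mul_left _
  calc ∑' k : ℕ, kernel α (n * r + k)
      = ∑' p : ℕ × Fin n, kernel α (n * r + (p.1 * n + p.2 : ℕ)) :=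
        ((Nat.divModEquiv n).symm.tsum_eq _).symm
    _ ≤ ∑' p : ℕ × Fin n, (n : ℝ) ^ (-α) * kernel α (r + p.1) :=
        ((Nat.divModEquiv n).symm.summable_iff.2 (hsummable (n * r))).tsum_le_tsum hterm hbound
    _ = (n : ℝ) ^ (1 - α) * ∑' k : ℕ, kernel α (r + k) := by
        rw [hbound.tsum_prod, ← tsum_mul_left]
        exact tsum_congr fun k => (hcell k).tsum_eq

lemma interaction_distant_mul_le {α : ℝ} (hα : 1 < α) {n r : ℕ} (hn : 0 < n) (hr : 0 < r) (x : ℤ) :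
    interaction α x {y | (n * r : ℤ) ≤ |x - y|} ≤
      (n : ℝ) ^ (1 - α) * interaction α x {y | (r : ℤ) ≤ |x - y|} := by
  have hdistant := interaction_distant hα (Nat.mul_pos hn hr) x
  push_cast at hdistant
  rw [hdistant, interaction_distant hα hr, mul_left_comm]
  exact mul_le_mul_of_nonneg_left (tsum_kernel_mul_add_le hα hn hr) zero_le_two

lemma hasSum_indicator_interaction {α : ℝ} (hα : 1 < α) (I : Finset ℤ) (S : Set ℤ) :
    HasSum (S.indicator fun y => interaction α y I) (∑ x ∈ I, interaction α x S) := by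
  have hcolumn : S.indicator (fun y => interaction α y I) =
      fun y => ∑ x ∈ I, S.indicator (fun y => kernel α (x - y)) y := by
    ext y
    by_cases hy : y ∈ S <;> simp [hy, interaction_coe, kernel_sub_comm α y]
  rw [hcolumn]
  exact hasSum_sum fun x _ => ((summable_kernel_sub hα x).indicator S).hasSum

lemma sum_interaction_compl_le {α : ℝ} (hα : 1 < α) {I B : Finset ℤ} {c : ℝ}
    (h : ∀ y ∉ B, interaction α y I ≤ c * interaction α y B) :
    ∑ x ∈ I, interaction α x (↑B)ᶜ ≤ c * cut α B := by
  refine hasSum_le (fun y => ?_) (hasSum_indicator_interaction hα I (↑B)ᶜ)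
    ((hasSum_indicator_interaction hα B (↑B)ᶜ).mul_left c)
  by_cases hy : y ∈ B
  · simp [hy]
  · simpa [hy] using h y hy

namespace FarApart

variable {m : ℕ} {γ δ : Finset ℤ} {x y : ℤ}

lemma two_pow_mul_le_abs_sub (hfar : FarApart m γ δ) (hδ : Even #δ) (hscale : scale γ ≤ scale δ)
    (hx : x ∈ enclosed γ) (hxy : ¬(x ∈ enclosed δ ↔ y ∈ enclosed δ)) :
    2 ^ m * 2 ^ (scale γ + 1) ≤ |x - y| := by
  obtain ⟨p, hp, q, hq, hpx, hxq⟩ := exists_le_lt_of_mem_enclosed hx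
  obtain ⟨r, hr, hrxy⟩ := exists_mem_uIoc_of_not_mem_enclosed_iff hδ hxy
  have hpr := hfar p hp r hr
  have hqr := hfar q hq r hr
  have hpq := abs_sub_lt_two_pow_scale hp hq
  have hreach := two_pow_scale_le_two_pow_reach m (scale γ)
  have hle : (2 : ℤ) ^ m * 2 ^ (scale γ + 1) ≤ 2 ^ reach m (scale γ) := by
    rw [← pow_add]
    exact pow_le_pow_right₀ one_le_two (by unfold reach; lia)
  rw [min_eq_left hscale] at hpr hqr
  rw [Set.mem_uIoc] at hrxy
  grind

lemma mem_enclosed_iff_of_mem_collar (hfar : FarApart m γ δ) (hγ : Even #γ)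
    (hscale : scale δ ≤ scale γ) (hx : x ∈ collar m δ) (hy : y ∈ collar m δ) :
    x ∈ enclosed γ ↔ y ∈ enclosed γ := by
  by_contra hxy
  obtain ⟨r, hr, hrxy⟩ := exists_mem_uIoc_of_not_mem_enclosed_iff hγ hxy
  obtain ⟨p, hp, hxp⟩ := hx
  obtain ⟨q, hq, hyq⟩ := hy
  have hrp := hfar r hr p hp
  have hrq := hfar r hr q hq
  have hpq := abs_sub_lt_two_pow_scale hp hq
  have hreach := two_pow_scale_le_two_pow_reach m (scale δ)
  rw [min_eq_right hscale] at hrp hrq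
  rw [Set.mem_uIoc] at hrxy
  grind

end FarApart

open Classical in
/-- The sites enclosed by those contours in `𝒞` whose collar is contained in `W`. -/
def sitesWithin (m : ℕ) (𝒞 : Finset (Finset ℤ)) (W : Set ℤ) : Finset ℤ :=
  {δ ∈ 𝒞 | collar m δ ⊆ W}.biUnion enclosed

lemma mem_sitesWithin {m : ℕ} {𝒞 : Finset (Finset ℤ)} {W : Set ℤ} {x : ℤ} :
    x ∈ sitesWithin m 𝒞 W ↔ ∃ δ ∈ 𝒞, collar m δ ⊆ W ∧ x ∈ enclosed δ := by
  simp only [sitesWithin, mem_biUnion, mem_filter, and_assoc]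

lemma interaction_sitesWithin_le {α : ℝ} (hα : 1 < α) {m : ℕ} {𝒞 : Finset (Finset ℤ)}
    (hfar : (𝒞 : Set (Finset ℤ)).Pairwise (FarApart m)) {W : Set ℤ} {w : ℤ} (hw : w ∉ W) :
    interaction α w (sitesWithin m 𝒞 W) ≤ 4 * (1 / 2) ^ m * interaction α w W := by
  classical
  exact interaction_biUnion_enclosed_le hα (hfar.mono (coe_subset.2 (filter_subset _ _)))
      (fun _ hδ => (mem_filter.1 hδ).2) hw

lemma abs_sub_lt_of_mem_enclosed {γ : Finset ℤ} {x y : ℤ} (hx : x ∈ enclosed γ)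
    (hy : y ∈ enclosed γ) : |x - y| < 2 ^ (scale γ + 1) := by
  obtain ⟨p, hp, q, hq, hpx, hxq⟩ := exists_le_lt_of_mem_enclosed hx
  obtain ⟨p', hp', q', hq', hpy, hyq⟩ := exists_le_lt_of_mem_enclosed hy
  have := abs_sub_lt_two_pow_scale hp hq'
  have := abs_sub_lt_two_pow_scale hp' hq
  grind

/-- The fraction of the energy of a contour which the other contours can compensate: the first term
is due to contours of smaller scale, the second one to those of larger scale. -/
def leakage (α : ℝ) (m : ℕ) : ℝ := 8 * (1 / 2) ^ m + (2 ^ m) ^ (1 - α)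

lemma leakage_nonneg (α : ℝ) (m : ℕ) : 0 ≤ leakage α m := by
  unfold leakage
  positivity

lemma exists_leakage_le {α : ℝ} (hα : 1 < α) {c : ℝ} (hc : 0 < c) : ∃ m, leakage α m ≤ c := by
  have hsmall : Filter.Tendsto (fun m : ℕ => (1 / 2 : ℝ) ^ m) Filter.atTop (nhds 0) :=
    tendsto_pow_atTop_nhds_zero_of_lt_one (by norm_num) (by norm_num)
  have hlarge : Filter.Tendsto (fun m : ℕ => ((2 : ℝ) ^ m) ^ (1 - α)) Filter.atTop (nhds 0) := by
    simpa only [neg_sub, Function.comp_def] using (tendsto_rpow_neg_atTop (sub_pos.2 hα)).comp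
      (tendsto_pow_atTop_atTop_of_one_lt (one_lt_two (α := ℝ)))
  have hsum := (hsmall.const_mul 8).add hlarge
  rw [mul_zero, zero_add] at hsum
  exact (hsum.eventually (eventually_le_nhds hc)).exists

namespace IsContourDecomposition

variable {m : ℕ} {𝒞 : Finset (Finset ℤ)} {A γ : Finset ℤ}

/-- A pair which is separated by `γ` and yet agrees in `A` is separated by another contour `δ`; if
`δ` is smaller than `γ`, then it lies on one side of `γ`. -/
lemma distant_or_mem_sitesWithin (h𝒞 : IsContourDecomposition m 𝒞 (flips A)) (hγ : γ ∈ 𝒞) {x y : ℤ}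
    (hx : x ∈ enclosed γ) (hy : y ∉ enclosed γ) (hxy : (x, y) ∈ agreeing A) :
    2 ^ m * 2 ^ (scale γ + 1) ≤ |x - y| ∨ x ∈ sitesWithin m 𝒞 (enclosed γ) ∨
      y ∈ sitesWithin m 𝒞 (↑(enclosed γ))ᶜ := by
  have heven : ∀ δ ∈ 𝒞, Even #δ := fun δ hδ => (h𝒞.isContour δ hδ).even_card
  obtain ⟨δ, hδ, hne, hsep⟩ := exists_ne_not_mem_enclosed_iff h𝒞.pairwiseDisjoint heven hγ hx hy
    (by rwa [h𝒞.biUnion_eq, enclosed_flips])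
  have hfar : FarApart m γ δ := h𝒞.pairwise_farApart hγ hδ hne.symm
  rcases le_total (scale γ) (scale δ) with hscale | hscale
  · exact .inl (hfar.two_pow_mul_le_abs_sub (heven δ hδ) hscale hx hsep)
  have hside := fun u v => hfar.mem_enclosed_iff_of_mem_collar (heven γ hγ) hscale (x := u) (y := v)
  by_cases hxδ : x ∈ enclosed δ
  · refine .inr (.inl (mem_sitesWithin.2 ⟨δ, hδ, fun u hu => ?_, hxδ⟩))
    exact (hside u x hu (enclosed_subset_collar m δ hxδ)).2 hx
  · have hyδ : y ∈ enclosed δ := by tauto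
    refine .inr (.inr (mem_sitesWithin.2 ⟨δ, hδ, fun u hu hu' => hy ?_, hyδ⟩))
    exact (hside u y hu (enclosed_subset_collar m δ hyδ)).1 hu'

lemma interaction_agreeing_le {α : ℝ} (hα : 1 < α) (h𝒞 : IsContourDecomposition m 𝒞 (flips A))
    (hγ : γ ∈ 𝒞) {x : ℤ} (hx : x ∈ enclosed γ) (hxγ : x ∉ sitesWithin m 𝒞 (enclosed γ)) :
    interaction α x {y | y ∉ enclosed γ ∧ (x, y) ∈ agreeing A} ≤
      ((2 ^ m) ^ (1 - α) + 4 * (1 / 2) ^ m) * interaction α x (↑(enclosed γ))ᶜ := by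
  set far : Set ℤ := {y | ((2 ^ m : ℕ) * (2 ^ (scale γ + 1) : ℕ) : ℤ) ≤ |x - y|}
  set near : Set ℤ := {y | ((2 ^ (scale γ + 1) : ℕ) : ℤ) ≤ |x - y|} with hnear
  have hcover : {y | y ∉ enclosed γ ∧ (x, y) ∈ agreeing A} ⊆
      far ∪ sitesWithin m 𝒞 (↑(enclosed γ))ᶜ := fun y ⟨hy, hxy⟩ =>
    (h𝒞.distant_or_mem_sitesWithin hγ hx hy hxy).imp (fun h => by exact_mod_cast h)
      fun h => h.resolve_left hxγ
  have houtside : near ⊆ (↑(enclosed γ))ᶜ := fun y hy hyγ => by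
    have := abs_sub_lt_of_mem_enclosed hx hyγ
    rw [hnear, Set.mem_ofPred_eq] at hy
    push_cast at hy
    lia
  have hfar : interaction α x far ≤ (2 ^ m) ^ (1 - α) * interaction α x near := by
    exact_mod_cast interaction_distant_mul_le hα (by positivity) (by positivity) x
  calc interaction α x {y | y ∉ enclosed γ ∧ (x, y) ∈ agreeing A}
      ≤ interaction α x far + interaction α x (sitesWithin m 𝒞 (↑(enclosed γ))ᶜ) :=
        (interaction_mono hα x hcover).trans (interaction_union_le hα x _ _)
    _ ≤ (2 ^ m) ^ (1 - α) * interaction α x (↑(enclosed γ))ᶜ +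
          4 * (1 / 2) ^ m * interaction α x (↑(enclosed γ))ᶜ := by
        gcongr
        · exact hfar.trans (by gcongr; exact interaction_mono hα x houtside)
        · exact interaction_sitesWithin_le hα h𝒞.pairwise_farApart (not_not.2 hx)
    _ = ((2 ^ m) ^ (1 - α) + 4 * (1 / 2) ^ m) * interaction α x (↑(enclosed γ))ᶜ := by ring

lemma cutWithin_agreeing_le {α : ℝ} (hα : 1 < α) (h𝒞 : IsContourDecomposition m 𝒞 (flips A))
    (hγ : γ ∈ 𝒞) :
    cutWithin α (agreeing A) (enclosed γ) ≤ leakage α m * cut α (enclosed γ) := by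
  set B := enclosed γ
  set c : ℝ := (2 ^ m) ^ (1 - α) + 4 * (1 / 2) ^ m
  have hrow : ∀ x ∈ B, interaction α x {y | y ∉ B ∧ (x, y) ∈ agreeing A} ≤
      c * interaction α x (↑B)ᶜ +
        if x ∈ sitesWithin m 𝒞 B then interaction α x (↑B)ᶜ else 0 := fun x hx => by
    split_ifs with hxB
    · exact (interaction_mono hα x fun y hy => hy.1).trans
        (le_add_of_nonneg_left (mul_nonneg (by positivity) (interaction_nonneg _ _ _)))
    · rw [add_zero]
      exact h𝒞.interaction_agreeing_le hα hγ hx hxB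
  have hinner : ∑ x ∈ B with x ∈ sitesWithin m 𝒞 B, interaction α x (↑B)ᶜ ≤
      4 * (1 / 2) ^ m * cut α B :=
    (sum_le_sum_of_subset_of_nonneg (fun x hx => (mem_filter.1 hx).2)
      fun _ _ _ => interaction_nonneg _ _ _).trans <|
        sum_interaction_compl_le hα fun y hy =>
          interaction_sitesWithin_le hα h𝒞.pairwise_farApart hy
  calc cutWithin α (agreeing A) B
      ≤ c * cut α B + ∑ x ∈ B with x ∈ sitesWithin m 𝒞 B, interaction α x (↑B)ᶜ := by
        rw [cut, mul_sum, sum_filter, ← sum_add_distrib]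
        exact sum_le_sum hrow
    _ ≤ c * cut α B + 4 * (1 / 2) ^ m * cut α B := by gcongr
    _ = leakage α m * cut α B := by rw [leakage]; ring

end IsContourDecomposition

lemma sum_symmDiff_le {ι : Type*} [DecidableEq ι] (h : ι → ℝ) (A B : Finset ι) :
    ∑ x ∈ A ∆ B, h x ≤ ∑ x ∈ A, h x + ∑ x ∈ B, |h x| := by
  have hunion : ∑ x ∈ A ∆ B, h x = ∑ x ∈ A \ B, h x + ∑ x ∈ B \ A, h x := by
    rw [symmDiff_def, sup_eq_union, sum_union disjoint_sdiff_sdiff]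
  have hA := sum_inter_add_sum_sdiff A B h
  have hB := sum_inter_add_sum_sdiff B A fun x => |h x|
  rw [inter_comm B A] at hB
  have hdiff : ∑ x ∈ B \ A, h x ≤ ∑ x ∈ B \ A, |h x| := sum_le_sum fun x _ => le_abs_self (h x)
  have hinter : ∑ x ∈ A ∩ B, -|h x| ≤ ∑ x ∈ A ∩ B, h x :=
    sum_le_sum fun x _ => neg_abs_le (h x)
  rw [sum_neg_distrib] at hinter
  linarith

namespace IsContourDecomposition

variable {m : ℕ} {𝒞 : Finset (Finset ℤ)} {A γ : Finset ℤ}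

lemma hamP_flip_add_cut_le {α : ℝ} (hα : 1 < α) (h𝒞 : IsContourDecomposition m 𝒞 (flips A))
    (hγ : γ ∈ 𝒞) {h : ℤ → ℝ} {η : ℝ} (hm : leakage α m ≤ (1 - η) / 4)
    (hfield : ∑ x ∈ enclosed γ, |h x| ≤ η * cut α (enclosed γ)) :
    hamP α h (spinP (A ∆ enclosed γ)) + (1 - η) * cut α (enclosed γ) ≤ hamP α h (spinP A) := by
  have hagree := (h𝒞.cutWithin_agreeing_le hα hγ).trans
    (mul_le_mul_of_nonneg_right hm (cut_nonneg α (enclosed γ)))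
  rw [hamP_spinP hα, hamP_spinP hα]
  linarith [cut_add_two_mul_cutWithin_agreeing hα A (enclosed γ), sum_symmDiff_le h A (enclosed γ)]

lemma hamP_flip_add_totalCells_le {α : ℝ} (hα1 : 1 < α) (hα2 : α ≤ 2)
    (h𝒞 : IsContourDecomposition m 𝒞 (flips A)) (hγ : γ ∈ 𝒞) {h : ℤ → ℝ} {η : ℝ}
    (hm : leakage α m ≤ (1 - η) / 4)
    (hfield : ∑ x ∈ enclosed γ, |h x| ≤ η * cut α (enclosed γ)) :
    hamP α h (spinP (A ∆ enclosed γ)) + (1 - η) / (16 * (m + 21)) * totalCells γ ≤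
      hamP α h (spinP A) := by
  have hcells : (1 - η) / (16 * (m + 21)) * totalCells γ ≤ (1 - η) * cut α (enclosed γ) := by
    rw [div_mul_eq_mul_div, div_le_iff₀ (by positivity), mul_assoc, mul_comm (cut _ _)]
    exact mul_le_mul_of_nonneg_left (totalCells_le_cut hα1 hα2 (h𝒞.isContour γ hγ))
      (by linarith [leakage_nonneg α m])
  linarith [h𝒞.hamP_flip_add_cut_le hα1 hγ hm hfield]

end IsContourDecomposition

/-! ### Counting contours -/

/-- The nonempty subsets of `[-2 ^ K, 2 ^ K)`. -/
def dyadicSubsets (K : ℕ) : Finset (Finset ℤ) :=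
  {γ ∈ (Ico (-2 ^ K : ℤ) (2 ^ K)).powerset | γ.Nonempty}

lemma mem_dyadicSubsets {K : ℕ} {γ : Finset ℤ} :
    γ ∈ dyadicSubsets K ↔ γ ⊆ Ico (-2 ^ K : ℤ) (2 ^ K) ∧ γ.Nonempty := by
  rw [dyadicSubsets, mem_filter, mem_powerset]

lemma image_half_mem_dyadicSubsets {K : ℕ} {γ : Finset ℤ} (hγ : γ ∈ dyadicSubsets (K + 1)) :
    γ.image (· / 2) ∈ dyadicSubsets K := by
  rw [mem_dyadicSubsets] at hγ ⊢
  refine ⟨image_subset_iff.2 fun z hz => ?_, hγ.2.image _⟩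
  have := mem_Ico.1 (hγ.1 hz)
  rw [mem_Ico]
  grind

/-- The generating function of `dyadicSubsets K`, with weight `t` for each point and weight `q` for
each dyadic cell of side `2, …, 2 ^ K`. -/
def cellSum (q : ℝ) (K : ℕ) (t : ℝ) : ℝ :=
  ∑ γ ∈ dyadicSubsets K, t ^ #γ * q ^ ∑ k ∈ range K, cellCount (k + 1) γ

lemma cellCount_succ (k : ℕ) (γ : Finset ℤ) :
    cellCount (k + 1) γ = cellCount k (γ.image (· / 2)) := by
  simp only [cellCount, image_image, Function.comp_def,
    Int.ediv_ediv_of_nonneg (zero_le_two (α := ℤ)), pow_succ']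

lemma cellCount_zero (γ : Finset ℤ) : cellCount 0 γ = #γ := by
  simp [cellCount]

lemma card_filter_image_half_le (𝒮 : Finset (Finset ℤ)) (S : Finset ℤ) :
    #{γ ∈ 𝒮 | γ.image (· / 2) = S} ≤ 4 ^ #S := by
  have hsubset : {γ ∈ 𝒮 | γ.image (· / 2) = S} ⊆
      (S.biUnion fun s => {2 * s, 2 * s + 1}).powerset := fun γ hγ => by
    refine mem_powerset.2 fun z hz => mem_biUnion.2 ⟨z / 2, ?_, ?_⟩
    · rw [← (mem_filter.1 hγ).2]
      exact mem_image_of_mem _ hz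
    · rw [mem_insert, mem_singleton]
      lia
  calc #{γ ∈ 𝒮 | γ.image (· / 2) = S} ≤ 2 ^ #(S.biUnion fun s => {2 * s, 2 * s + 1}) :=
        (card_le_card hsubset).trans_eq (card_powerset _)
    _ ≤ 2 ^ (#S * 2) := pow_le_pow_right₀ one_le_two
        (card_biUnion_le_card_mul _ _ _ fun _ _ => card_le_two)
    _ = 4 ^ #S := by rw [mul_comm, pow_mul]; norm_num

/-- Halving all positions turns a set into its cells of side `2`; at most `4 ^ #S` sets have the
same cells `S`. -/
lemma cellSum_succ_le {q : ℝ} (hq : 0 ≤ q) (K : ℕ) {t : ℝ} (ht0 : 0 ≤ t) (ht1 : t ≤ 1) :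
    cellSum q (K + 1) t ≤ cellSum q K (4 * q * t) := by
  have hterm : ∀ γ, t ^ #γ * q ^ ∑ k ∈ range (K + 1), cellCount (k + 1) γ ≤
      t ^ #(γ.image (· / 2)) *
        q ^ (∑ k ∈ range K, cellCount (k + 1) (γ.image (· / 2)) + #(γ.image (· / 2))) := fun γ => by
    simp only [sum_range_succ', cellCount_succ _ γ, cellCount_zero]
    exact mul_le_mul_of_nonneg_right (pow_le_pow_of_le_one ht0 ht1 card_image_le) (by positivity)
  rw [cellSum, ← sum_fiberwise_of_maps_to fun γ => image_half_mem_dyadicSubsets]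
  refine sum_le_sum fun S _ => ?_
  calc ∑ γ ∈ dyadicSubsets (K + 1) with γ.image (· / 2) = S,
        t ^ #γ * q ^ ∑ k ∈ range (K + 1), cellCount (k + 1) γ
      ≤ #{γ ∈ dyadicSubsets (K + 1) | γ.image (· / 2) = S} •
          (t ^ #S * q ^ (∑ k ∈ range K, cellCount (k + 1) S + #S)) :=
        sum_le_card_nsmul _ _ _ fun γ hγ => (mem_filter.1 hγ).2 ▸ hterm γ
    _ ≤ 4 ^ #S * (t ^ #S * q ^ (∑ k ∈ range K, cellCount (k + 1) S + #S)) := by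
        rw [nsmul_eq_mul]
        gcongr
        exact_mod_cast card_filter_image_half_le _ S
    _ = (4 * q * t) ^ #S * q ^ ∑ k ∈ range K, cellCount (k + 1) S := by
        rw [pow_add, mul_pow, mul_pow]
        ring

lemma cellSum_zero_le {q t : ℝ} (ht0 : 0 ≤ t) (ht1 : t ≤ 1) : cellSum q 0 t ≤ 4 * t := by
  have hcard : #(dyadicSubsets 0) ≤ 4 :=
    (card_filter_le _ _).trans_eq (by rw [card_powerset, Int.card_Ico]; rfl)
  calc cellSum q 0 t ≤ #(dyadicSubsets 0) • t := sum_le_card_nsmul _ _ _ fun γ hγ => by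
        rw [sum_range_zero, pow_zero, mul_one]
        exact pow_le_of_le_one ht0 ht1 (mem_dyadicSubsets.1 hγ).2.card_pos.ne'
    _ ≤ 4 * t := by
        rw [nsmul_eq_mul]
        gcongr
        exact_mod_cast hcard

lemma cellSum_le {q : ℝ} (hq0 : 0 ≤ q) (hq1 : 4 * q ≤ 1) (K : ℕ) {t : ℝ} (ht0 : 0 ≤ t)
    (ht1 : t ≤ 1) : cellSum q K t ≤ 4 * t * (4 * q) ^ K := by
  induction K generalizing t with
  | zero => simpa using cellSum_zero_le ht0 ht1
  | succ K ih =>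
    calc cellSum q (K + 1) t ≤ cellSum q K (4 * q * t) := cellSum_succ_le hq0 K ht0 ht1
      _ ≤ 4 * (4 * q * t) * (4 * q) ^ K := ih (by positivity) (mul_le_one₀ hq1 ht0 ht1)
      _ = 4 * t * (4 * q) ^ (K + 1) := by ring

lemma mem_dyadicSubsets_of_zero_mem_enclosed {γ : Finset ℤ} (hγ : 0 ∈ enclosed γ) :
    γ ∈ dyadicSubsets (scale γ + 1) := by
  obtain ⟨p, hp, q, hq, hp0, hq0⟩ := exists_le_lt_of_mem_enclosed hγ
  refine mem_dyadicSubsets.2 ⟨fun r hr => ?_, p, hp⟩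
  have := abs_sub_lt_two_pow_scale hr hp
  have := abs_sub_lt_two_pow_scale hq hr
  rw [mem_Ico]
  grind

lemma pow_totalCells (q : ℝ) (γ : Finset ℤ) :
    q ^ totalCells γ = q ^ #γ * q ^ ∑ k ∈ range (scale γ + 1), cellCount (k + 1) γ := by
  rw [totalCells, sum_range_succ', cellCount_zero, add_comm, pow_add]

lemma sum_pow_totalCells_le {q : ℝ} (hq0 : 0 ≤ q) (hq1 : 8 * q ≤ 1) {Γ : Finset (Finset ℤ)}
    (hΓ : ∀ γ ∈ Γ, 0 ∈ enclosed γ) : ∑ γ ∈ Γ, q ^ totalCells γ ≤ 8 * q := by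
  have hscale : ∀ K, ∑ γ ∈ Γ with scale γ = K, q ^ totalCells γ ≤ 4 * q * (1 / 2) ^ K := fun K => by
    calc ∑ γ ∈ Γ with scale γ = K, q ^ totalCells γ
        = ∑ γ ∈ Γ with scale γ = K, q ^ #γ * q ^ ∑ k ∈ range (K + 1), cellCount (k + 1) γ :=
          sum_congr rfl fun γ hγ => by rw [pow_totalCells, (mem_filter.1 hγ).2]
      _ ≤ cellSum q (K + 1) q := by
          refine sum_le_sum_of_subset_of_nonneg (fun γ hγ => ?_) fun _ _ _ => by positivity
          rw [mem_filter] at hγ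
          exact hγ.2 ▸ mem_dyadicSubsets_of_zero_mem_enclosed (hΓ γ hγ.1)
      _ ≤ 4 * q * (4 * q) ^ (K + 1) :=
          cellSum_le hq0 (by linarith) (K + 1) hq0 (by linarith)
      _ ≤ 4 * q * (1 / 2) ^ (K + 1) := by gcongr; linarith
      _ ≤ 4 * q * (1 / 2) ^ K := by
          gcongr _ * ?_
          exact pow_le_pow_of_le_one (by norm_num) (by norm_num) K.le_succ
  obtain ⟨N, hN⟩ := exists_nat_subset_range (Γ.image scale)
  calc ∑ γ ∈ Γ, q ^ totalCells γ
      = ∑ K ∈ range N, ∑ γ ∈ Γ with scale γ = K, q ^ totalCells γ :=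
        (sum_fiberwise_of_maps_to (fun γ hγ => hN (mem_image_of_mem _ hγ)) _).symm
    _ ≤ ∑ K ∈ range N, 4 * q * (1 / 2) ^ K := sum_le_sum fun K _ => hscale K
    _ ≤ 4 * q * 2 := by
        rw [← mul_sum]
        gcongr
        exact sum_geometric_two_le N
    _ = 8 * q := by ring

/-! ### The Peierls argument -/

lemma flips_subset_Icc {A : Finset ℤ} {L : ℕ} (hA : A ∈ box L) :
    flips A ⊆ Icc (-(L : ℤ)) (L + 1) := fun q hq => by
  have hbox : ∀ x ∈ A, -(L : ℤ) ≤ x ∧ x ≤ L := fun x hx => mem_Icc.1 (mem_powerset.1 hA hx)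
  have := hbox q
  have := hbox (q - 1)
  rw [mem_flips] at hq
  rw [mem_Icc]
  grind

lemma enclosed_mem_box {γ : Finset ℤ} {L : ℕ} (hγ : γ ⊆ Icc (-(L : ℤ)) (L + 1)) :
    enclosed γ ∈ box L := by
  refine mem_powerset.2 fun x hx => ?_
  obtain ⟨p, hp, q, hq, hpx, hxq⟩ := exists_le_lt_of_mem_enclosed hx
  have := mem_Icc.1 (hγ hp)
  have := mem_Icc.1 (hγ hq)
  exact mem_Icc.2 ⟨by lia, by lia⟩

lemma symmDiff_mem_box {A B : Finset ℤ} {L : ℕ} (hA : A ∈ box L) (hB : B ∈ box L) :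
    A ∆ B ∈ box L :=
  mem_powerset.2 (symmDiff_le_sup.trans (union_subset (mem_powerset.1 hA) (mem_powerset.1 hB)))

lemma sum_box_symmDiff (w : Finset ℤ → ℝ) {B : Finset ℤ} {L : ℕ} (hB : B ∈ box L) :
    ∑ A ∈ box L, w (A ∆ B) = ∑ A ∈ box L, w A :=
  sum_nbij' (· ∆ B) (· ∆ B) (fun _ hA => symmDiff_mem_box hA hB)
    (fun _ hA => symmDiff_mem_box hA hB) (fun A _ => symmDiff_symmDiff_cancel_right B A)
    (fun A _ => symmDiff_symmDiff_cancel_right B A) fun _ _ => rfl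

lemma sum_zero_mem_le_of_flip_le {w : Finset ℤ → ℝ} (hw : ∀ A, 0 ≤ w A) {q : ℝ} (hq0 : 0 ≤ q)
    (hq1 : 8 * q ≤ 1)
    (hflip : ∀ A, 0 ∈ A → ∃ γ ⊆ flips A, 0 ∈ enclosed γ ∧
      w A ≤ q ^ totalCells γ * w (A ∆ enclosed γ)) (L : ℕ) :
    ∑ A ∈ box L with 0 ∈ A, w A ≤ 8 * q * ∑ A ∈ box L, w A := by
  set Γ := {γ ∈ (Icc (-(L : ℤ)) (L + 1)).powerset | 0 ∈ enclosed γ}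
  have hnonneg : ∀ A γ, 0 ≤ q ^ totalCells γ * w (A ∆ enclosed γ) := fun A γ =>
    mul_nonneg (pow_nonneg hq0 _) (hw _)
  have hle : ∀ A ∈ box L, 0 ∈ A → w A ≤ ∑ γ ∈ Γ, q ^ totalCells γ * w (A ∆ enclosed γ) := by
    intro A hA h0
    obtain ⟨γ, hγA, hγ0, hwA⟩ := hflip A h0
    have hγ : γ ∈ Γ := mem_filter.2 ⟨mem_powerset.2 (hγA.trans (flips_subset_Icc hA)), hγ0⟩
    exact hwA.trans (single_le_sum (fun γ _ => hnonneg A γ) hγ)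
  calc ∑ A ∈ box L with 0 ∈ A, w A
      ≤ ∑ A ∈ box L with 0 ∈ A, ∑ γ ∈ Γ, q ^ totalCells γ * w (A ∆ enclosed γ) :=
        sum_le_sum fun A hA => hle A (mem_filter.1 hA).1 (mem_filter.1 hA).2
    _ ≤ ∑ A ∈ box L, ∑ γ ∈ Γ, q ^ totalCells γ * w (A ∆ enclosed γ) :=
        sum_le_sum_of_subset_of_nonneg (filter_subset _ _) fun A _ _ =>
          sum_nonneg fun γ _ => hnonneg A γ
    _ = (∑ γ ∈ Γ, q ^ totalCells γ) * ∑ A ∈ box L, w A := by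
        rw [sum_comm, sum_mul]
        refine sum_congr rfl fun γ hγ => ?_
        rw [← mul_sum, sum_box_symmDiff w
          (enclosed_mem_box (mem_powerset.1 (mem_filter.1 hγ).1))]
    _ ≤ 8 * q * ∑ A ∈ box L, w A := by
        refine mul_le_mul_of_nonneg_right ?_ (sum_nonneg fun A _ => hw A)
        exact sum_pow_totalCells_le hq0 hq1 fun γ hγ => (mem_filter.1 hγ).2

lemma exists_hamP_flip_add_totalCells_le {α : ℝ} (hα1 : 1 < α) (hα2 : α ≤ 2) {h : ℤ → ℝ} {η : ℝ}
    (hfield : ∀ Λ : Finset ℤ, Λ.Nonempty → ∑ x ∈ Λ, |h x| ≤ η * cut α Λ) {m : ℕ}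
    (hm : leakage α m ≤ (1 - η) / 4) {A : Finset ℤ} {x : ℤ} (hx : x ∈ A) :
    ∃ γ ⊆ flips A, x ∈ enclosed γ ∧
      hamP α h (spinP (A ∆ enclosed γ)) + (1 - η) / (16 * (m + 21)) * totalCells γ ≤
        hamP α h (spinP A) := by
  obtain ⟨𝒞, h𝒞⟩ := exists_isContourDecomposition m (even_card_flips A)
  rw [← enclosed_flips A, ← h𝒞.biUnion_eq] at hx
  obtain ⟨γ, hγ, hxγ⟩ := exists_mem_enclosed_of_mem_enclosed_biUnion h𝒞.pairwiseDisjoint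
    (fun δ hδ => (h𝒞.isContour δ hδ).even_card) hx
  exact ⟨γ, h𝒞.subset hγ, hxγ,
    h𝒞.hamP_flip_add_totalCells_le hα1 hα2 hγ hm (hfield _ ⟨x, hxγ⟩)⟩

lemma exp_mul_le_pow_mul_exp {β c E F : ℝ} {n : ℕ} (hβ : 0 ≤ β) (hEF : F + c * n ≤ E) :
    Real.exp (-β * E) ≤ Real.exp (-β * c) ^ n * Real.exp (-β * F) := by
  rw [← Real.exp_nat_mul, ← Real.exp_add, Real.exp_le_exp]
  linarith [mul_le_mul_of_nonneg_left hEF hβ]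

lemma one_sub_le_avgP {α : ℝ} {h : ℤ → ℝ} {β : ℝ} {L : ℕ} {δ : ℝ}
    (hδ : ∑ A ∈ box L with 0 ∈ A, Real.exp (-β * hamP α h (spinP A)) ≤
      δ * ∑ A ∈ box L, Real.exp (-β * hamP α h (spinP A))) :
    1 - 2 * δ ≤ avgP α h β L := by
  have hsum : ∀ w : Finset ℤ → ℝ, ∑ A ∈ box L, spinP A 0 * w A =
      ∑ A ∈ box L, w A - 2 * ∑ A ∈ box L with 0 ∈ A, w A := fun w => by
    rw [sum_filter, mul_sum, ← sum_sub_distrib]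
    refine sum_congr rfl fun A _ => ?_
    by_cases h0 : 0 ∈ A
    · simp only [spinP, if_pos h0]
      ring
    · simp [spinP, h0]
  have hpos : 0 < ∑ A ∈ box L, Real.exp (-β * hamP α h (spinP A)) :=
    sum_pos (fun _ _ => Real.exp_pos _) ⟨∅, empty_mem_powerset _⟩
  rw [avgP, hsum, le_div_iff₀ hpos]
  linarith

lemma exp_neg_mul_le {β c δ : ℝ} (hc : 0 < c) (hδ : 0 < δ) (hβ : 1 / (c * δ) ≤ β) :
    Real.exp (-β * c) ≤ δ := by
  have hδβ : 1 / δ ≤ β * c := by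
    rw [div_le_iff₀ (by positivity)] at hβ ⊢
    linarith
  rw [neg_mul, Real.exp_neg]
  refine inv_le_of_inv_le₀ hδ ?_
  linarith [Real.add_one_le_exp (β * c), one_div δ]

lemma one_sub_le_avgP_of_field_le_cut {α : ℝ} (hα1 : 1 < α) (hα2 : α ≤ 2) {η : ℝ} {m : ℕ}
    (hm : leakage α m ≤ (1 - η) / 4) {h : ℤ → ℝ}
    (hfield : ∀ Λ : Finset ℤ, Λ.Nonempty → ∑ x ∈ Λ, |h x| ≤ η * cut α Λ) {β : ℝ} (hβ : 0 ≤ β)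
    (hβ1 : 8 * Real.exp (-β * ((1 - η) / (16 * (m + 21)))) ≤ 1) (L : ℕ) :
    1 - 16 * Real.exp (-β * ((1 - η) / (16 * (m + 21)))) ≤ avgP α h β L := by
  have hsum := sum_zero_mem_le_of_flip_le (fun A => (Real.exp_pos (-β * hamP α h (spinP A))).le)
    (Real.exp_pos _).le hβ1 (fun A hA => by
      obtain ⟨γ, hγA, hγ0, hγ⟩ := exists_hamP_flip_add_totalCells_le hα1 hα2 hfield hm hA
      exact ⟨γ, hγA, hγ0, exp_mul_le_pow_mul_exp hβ hγ⟩) L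
  linarith [one_sub_le_avgP hsum]

theorem phase_transition_with_field_general (α : ℝ) (hα1 : 1 < α) (hα2 : α ≤ 2) (η : ℝ)
    (hη : η < 1) (ε : ℝ) (hε : 0 < ε) :
    ∃ β₀ : ℝ, 0 < β₀ ∧ ∀ h : ℤ → ℝ,
      (∀ Λ : Finset ℤ, Λ.Nonempty →
        ∑ x ∈ Λ, |h x| ≤ η * ∑ x ∈ Λ, ∑' y : ℤ,
          if y ∈ Λ then 0 else |(x : ℝ) - (y : ℝ)| ^ (-α)) →
      ∀ β : ℝ, β₀ ≤ β → ∀ L : ℕ, 1 - ε ≤ avgP α h β L ∧ avgM α h β L ≤ -(1 - ε) := by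
  obtain ⟨m, hm⟩ := exists_leakage_le hα1 (show 0 < (1 - η) / 4 by linarith)
  set c := (1 - η) / (16 * (m + 21))
  have hc0 : 0 < c := div_pos (by linarith) (by positivity)
  have hδ0 : 0 < min (ε / 16) (1 / 8) := by positivity
  refine ⟨1 / (c * min (ε / 16) (1 / 8)), by positivity, fun h hfield β hβ L => ?_⟩
  have hβ0 : 0 ≤ β := le_trans (by positivity) hβ
  obtain ⟨hexpε, hexp⟩ := le_min_iff.1 (exp_neg_mul_le hc0 hδ0 hβ)
  have hplus : ∀ g : ℤ → ℝ, (∀ x, |g x| = |h x|) → 1 - ε ≤ avgP α g β L := fun g hg => by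
    have hg_cut : ∀ Λ : Finset ℤ, Λ.Nonempty → ∑ x ∈ Λ, |g x| ≤ η * cut α Λ := by
      simpa only [hg, cut_eq_sum_tsum] using hfield
    linarith [one_sub_le_avgP_of_field_le_cut hα1 hα2 hm hg_cut hβ0 (by linarith) L]
  rw [avgM_eq_neg_avgP, neg_le_neg_iff]
  exact ⟨hplus h fun _ => rfl, hplus (-h) fun x => abs_neg (h x)⟩

/-- stability of the phase transition under a nonnegative external field `h`
dominated by a fraction `η < 1` of the boundary coupling energy of every nonempty finite
`Λ ⊂ ℤ` (the inner sum `∑_{y ∈ ℤ∖Λ} |x−y|^{-α}` is a `tsum` with indicator). -/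
theorem phase_transition_with_field (α : ℝ) (hα1 : 1 < α) (hα2 : α ≤ 2)
    (h : ℤ → ℝ) (hpos : ∀ x, 0 ≤ h x) (η : ℝ) (hη0 : 0 < η) (hη1 : η < 1)
    (hdom : ∀ Λ : Finset ℤ, Λ.Nonempty →
      ∑ x ∈ Λ, h x ≤ η * ∑ x ∈ Λ, ∑' y : ℤ,
        if y ∈ Λ then 0 else |(x : ℝ) - (y : ℝ)| ^ (-α))
    (ε : ℝ) (hε0 : 0 < ε) (hε1 : ε < 1) :
    ∃ β₀ : ℝ, 0 < β₀ ∧ ∀ β : ℝ, β₀ ≤ β → ∀ L : ℕ,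
      1 - ε ≤ avgP α h β L ∧ avgM α h β L ≤ -(1 - ε) := by
  obtain ⟨β₀, hβ₀, hall⟩ := phase_transition_with_field_general α hα1 hα2 η hη1 ε hε0
  exact ⟨β₀, hβ₀, hall h (by simpa only [abs_of_nonneg (hpos _)] using hdom)⟩
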